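/- arXiv:2604.05245 — 2 statements merged into one kernel-verified Lean document; each statement's English description precedes it below -/
import Mathlib

section
/- Assume 0 < γ ≤ 1 (and γ < p). There exists a constant c₊ > 0, depending only on N, p, γ and λ₊, such that for every open bounded Ω ⊆ ℝ^N, every local minimizer u of J on Ω, every point x₀ ∈ Ω belonging to the closure of {x ∈ Ω : u(x) > 0}, and every 0 < r < dist(x₀, ∂Ω), one has sup_{B_r(x₀)} max(u, 0) ≥ c₊ r^{1+τ}. Analogously, there exists c₋ > 0 depending only on N, p, γ, λ₋ such that sup_{B_r(x₀)} max(−u, 0) ≥ c₋ r^{1+τ} whenever x₀ lies in the closure of {x ∈ Ω : u(x) < 0} and 0 < r < dist(x₀, ∂Ω). -/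
open MeasureTheory Metric Set
open scoped InnerProductSpace

/-- The Alt–Phillips potential `F_γ(t) = λ₊ (t₊)^γ + λ₋ (t₋)^γ`. -/
noncomputable def Fgam (γ lp lm : ℝ) (t : ℝ) : ℝ :=
  lp * (max t 0) ^ γ + lm * (max (-t) 0) ^ γ

/-- `u` is a `C¹(Ω)` function with `∫_Ω ‖∇u‖^p < ∞` which is a local minimizer of the
functional with density `‖∇v‖^p/p + F(v)`, with respect to Lipschitz competitors on
balls compactly contained in `Ω` agreeing with `u` on the boundary sphere. -/
def APLocMin (N : ℕ) (p : ℝ) (F : ℝ → ℝ) (Ω : Set (EuclideanSpace ℝ (Fin N)))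
    (u : EuclideanSpace ℝ (Fin N) → ℝ) : Prop :=
  (∀ x ∈ Ω, DifferentiableAt ℝ u x) ∧
  ContinuousOn (fun x => gradient u x) Ω ∧
  IntegrableOn (fun x => ‖gradient u x‖ ^ p) Ω volume ∧
  ∀ (z : EuclideanSpace ℝ (Fin N)) (r : ℝ), 0 < r → closure (Metric.ball z r) ⊆ Ω →
    ∀ (v : EuclideanSpace ℝ (Fin N) → ℝ) (K : NNReal),
      LipschitzOnWith K v (closure (Metric.ball z r)) →
      Set.EqOn v u (Metric.sphere z r) →
      (∫ x in Metric.ball z r, (‖gradient u x‖ ^ p / p + F (u x))) ≤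
        ∫ x in Metric.ball z r, (‖gradient v x‖ ^ p / p + F (v x))

theorem ap_integrable_fderiv {N : ℕ} {φ : EuclideanSpace ℝ (Fin N) → ℝ} {C : NNReal}
    (hφ : LipschitzWith C φ) (hc : HasCompactSupport φ)
    {v : EuclideanSpace ℝ (Fin N) → EuclideanSpace ℝ (Fin N)} (hv : Continuous v) :
    Integrable (fun x => fderiv ℝ φ x (v x)) := by
  have hK : IsCompact (tsupport φ) := hc
  have hi : Integrable (indicator (tsupport φ) (fun x => (C : ℝ) * ‖v x‖)) := by
    rw [integrable_indicator_iff hK.isClosed.measurableSet]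
    exact (by fun_prop : Continuous (fun x => (C : ℝ) * ‖v x‖)).continuousOn.integrableOn_compact hK
  refine hi.mono' ?_ ?_
  · have h1 : Measurable (fun x => fderiv ℝ φ x) := measurable_fderiv ℝ φ
    have h2 : Measurable v := hv.measurable
    exact (Measurable.aestronglyMeasurable (by
      have := (isBoundedBilinearMap_apply (𝕜 := ℝ) (E := EuclideanSpace ℝ (Fin N)) (F := ℝ)).continuous.measurable
      exact this.comp (h1.prodMk h2)))
  · refine Filter.Eventually.of_forall fun x => ?_
    by_cases hx : x ∈ tsupport φ
    · rw [indicator_of_mem hx]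
      exact ContinuousLinearMap.le_of_opNorm_le _ (norm_fderiv_le_of_lipschitz ℝ hφ) _
    · rw [indicator_of_notMem hx]
      have : fderiv ℝ φ x = 0 := by
        by_contra h
        exact hx (support_fderiv_subset ℝ h)
      simp [this]

theorem ap_ibp {N : ℕ} {φ : EuclideanSpace ℝ (Fin N) → ℝ} {C : NNReal}
    (hφ : LipschitzWith C φ) (hc : HasCompactSupport φ) (y : EuclideanSpace ℝ (Fin N)) :
    ∫ x, fderiv ℝ φ x (x - y) = - (N * ∫ x, φ x) := by
  have key : ∀ i : Fin N, ∫ x, fderiv ℝ φ x ((x i - y i) • EuclideanSpace.single i (1:ℝ))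
      = - ∫ x, φ x := by
    intro i
    have hf : LipschitzWith 1 (fun x : EuclideanSpace ℝ (Fin N) => x i - y i) := by
      refine LipschitzWith.of_dist_le_mul fun a b => ?_
      have := PiLp.norm_apply_le (a - b) i
      simpa [dist_eq_norm] using this
    have h := hf.integral_lineDeriv_mul_eq (μ := volume) hφ hc (EuclideanSpace.single i (1:ℝ))
    have h1 : ∀ x : EuclideanSpace ℝ (Fin N), lineDeriv ℝ
        (fun x : EuclideanSpace ℝ (Fin N) => x i - y i) x (EuclideanSpace.single i (1:ℝ)) = 1 := by
      intro x
      refine HasLineDerivAt.lineDeriv ?_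
      unfold HasLineDerivAt
      simpa using (((hasDerivAt_id (0:ℝ)).const_add (x i)).sub_const (y i))
    simp only [h1, one_mul] at h
    rw [h, ← integral_neg]
    refine integral_congr_ae ?_
    filter_upwards [hφ.ae_differentiableAt (μ := volume)] with x hx
    rw [hx.lineDeriv_eq_fderiv]
    simp [mul_comm]
  have hsum : ∀ x : EuclideanSpace ℝ (Fin N), fderiv ℝ φ x (x - y) =
      ∑ i, fderiv ℝ φ x ((x i - y i) • EuclideanSpace.single i (1:ℝ)) := by
    intro x
    rw [← map_sum]
    congr 1
    ext j
    simp [Finset.sum_apply, Pi.single_apply]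
  simp_rw [hsum]
  rw [integral_finsetSum]
  · simp only [key]; simp
  · intro i _
    exact ap_integrable_fderiv hφ hc (v := fun x => (x i - y i) • EuclideanSpace.single i (1:ℝ))
      (by fun_prop)

theorem ap_young {E : Type*} [NormedAddCommGroup E] [InnerProductSpace ℝ E] {p q c : ℝ}
    (hpq : p.HolderConjugate q) (hc : 0 < c) (x ξ η : E) (hη : η = (c * ‖x‖ ^ (q - 2)) • x) :
    ‖η‖ ^ p / p + c ^ (p - 1) * ⟪x, ξ - η⟫_ℝ ≤ ‖ξ‖ ^ p / p := by
  have hp := hpq.lt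
  have hq := hpq.symm.lt
  have hmul := hpq.mul_eq_add
  rcases eq_or_ne x 0 with rfl | hx
  · subst hη
    have : (0:ℝ) ^ p = 0 := Real.zero_rpow (by linarith)
    simp [this]
    positivity
  have hx0 : 0 < ‖x‖ := norm_pos_iff.2 hx
  set b := c ^ (p - 1) with hb
  have hb0 : 0 < b := Real.rpow_pos_of_pos hc _
  have hnη : ‖η‖ = c * ‖x‖ ^ (q - 1) := by
    rw [hη, norm_smul, Real.norm_of_nonneg (by positivity), mul_assoc, ← Real.rpow_add_one hx0.ne']
    ring_nf
  have hV : b * ‖x‖ = ‖η‖ ^ (p - 1) := by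
    rw [hnη, Real.mul_rpow hc.le (by positivity), ← Real.rpow_mul hx0.le]
    have : (q - 1) * (p - 1) = 1 := by nlinarith
    rw [this, Real.rpow_one]
  have hη0 : 0 < ‖η‖ := by rw [hnη]; positivity
  have h1 : (b * ‖x‖) ^ q = ‖η‖ ^ p := by
    rw [hV, ← Real.rpow_mul hη0.le]
    congr 1; nlinarith
  have h2 : b * ⟪x, η⟫_ℝ = ‖η‖ ^ p := by
    have : ⟪x, η⟫_ℝ = ‖x‖ * ‖η‖ := by
      rw [hη, real_inner_smul_right, norm_smul, Real.norm_of_nonneg (by positivity),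
        real_inner_self_eq_norm_sq]; ring
    rw [this, ← mul_assoc, hV, ← Real.rpow_add_one hη0.ne']
    ring_nf
  have h3 : b * ⟪x, ξ⟫_ℝ ≤ (b * ‖x‖) * ‖ξ‖ := by
    rw [mul_assoc]; exact mul_le_mul_of_nonneg_left (real_inner_le_norm _ _) hb0.le
  have h4 := Real.young_inequality_of_nonneg (norm_nonneg ξ) (by positivity : 0 ≤ b * ‖x‖) hpq
  rw [h1] at h4
  have h5 : ‖η‖ ^ p / p + ‖η‖ ^ p / q = ‖η‖ ^ p := by
    have := hpq.inv_add_inv_eq_one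
    rw [div_eq_mul_inv, div_eq_mul_inv, ← mul_add, this, mul_one]
  rw [inner_sub_right, mul_sub, h2]
  linarith

theorem ap_concave {γ u w M : ℝ} (h0 : 0 < γ) (h1 : γ ≤ 1) (hw : 0 ≤ w) (hwu : w < u)
    (hM : u ≤ M) : γ * M ^ (γ - 1) * (u - w) ≤ u ^ γ - w ^ γ := by
  have hu : 0 < u := by linarith
  have h := rpow_one_add_le_one_add_mul_self (s := w / u - 1)
    (by have := div_nonneg hw hu.le; linarith) h0.le h1
  have h2 : w ^ γ = u ^ γ * (w / u) ^ γ := by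
    rw [← Real.mul_rpow hu.le (by positivity)]; congr 1; field_simp
  have h3 : M ^ (γ - 1) ≤ u ^ (γ - 1) := Real.rpow_le_rpow_of_nonpos hu hM (by linarith)
  have h4 : u ^ γ = u ^ (γ - 1) * u := by rw [← Real.rpow_add_one hu.ne']; ring_nf
  have h5 : (w / u) ^ γ ≤ 1 + γ * (w / u - 1) := by simpa using h
  have h6 : γ * M ^ (γ - 1) * (u - w) ≤ γ * u ^ (γ - 1) * (u - w) := by gcongr
  have h7 : w ^ γ ≤ u ^ γ * (1 + γ * (w / u - 1)) := by
    rw [h2]; gcongr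
  have h8 : u ^ γ * (1 + γ * (w / u - 1)) = u ^ γ - γ * u ^ (γ - 1) * (u - w) := by
    rw [h4]; field_simp; ring
  linarith

theorem ap_wlip {E : Type*} [NormedAddCommGroup E] {q ρ a : ℝ} (hq : 1 < q) (hρ : 0 < ρ)
    (ha : 0 < a) (y : E) :
    ∃ K : NNReal, LipschitzWith K (fun x => a * (min ‖x - y‖ ρ) ^ q) := by
  have h1 : LipschitzWith 1 (fun x : E => min ‖x - y‖ ρ) := by
    refine LipschitzWith.min_const ?_ ρ
    refine LipschitzWith.of_dist_le_mul fun s t => ?_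
    have := abs_norm_sub_norm_le (s - y) (t - y)
    simpa [dist_eq_norm] using this
  have h2 : LipschitzOnWith (Real.toNNReal (a * (q * ρ ^ (q - 1)))) (fun t : ℝ => a * t ^ q)
      (Icc 0 ρ) := by
    refine Convex.lipschitzOnWith_of_nnnorm_hasDerivWithin_le (convex_Icc 0 ρ)
      (f' := fun t => a * (q * t ^ (q - 1))) ?_ ?_
    · intro t ht
      exact ((Real.hasDerivAt_rpow_const (Or.inr hq.le)).const_mul a).hasDerivWithinAt
    · intro t ht
      rw [← NNReal.coe_le_coe, coe_nnnorm, Real.coe_toNNReal _ (by positivity),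
        Real.norm_of_nonneg (by have := ht.1; positivity)]
      have := ht.1
      gcongr
      exact ht.2
  refine ⟨_, lipschitzOnWith_univ.1 (h2.comp (lipschitzOnWith_univ.2 h1) ?_)⟩
  intro x _
  exact ⟨le_min (norm_nonneg _) hρ.le, min_le_right _ _⟩

theorem ap_main {N : ℕ} {p γ lp lm : ℝ} (hp : 1 < p) (hγ0 : 0 < γ) (hγ1 : γ ≤ 1)
    (hlp : 0 < lp) {Ω : Set (EuclideanSpace ℝ (Fin N))}
    {u : EuclideanSpace ℝ (Fin N) → ℝ} (hu : APLocMin N p (Fgam γ lp lm) Ω u)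
    {y : EuclideanSpace ℝ (Fin N)} {ρ M : ℝ} (hρ : 0 < ρ) (hsub : closedBall y ρ ⊆ Ω)
    (huy : 0 < u y) (hM : ∀ x ∈ closedBall y ρ, u x ≤ M) :
    lp * γ * ρ ^ p ≤ N * (p / (p - 1)) ^ (p - 1) * M ^ (p - γ) := by
  by_contra! hcon
  obtain ⟨hdiff, hgc, -, hmin⟩ := hu
  have hM0 : 0 < M := huy.trans_le (hM y (mem_closedBall_self hρ.le))
  set q := p / (p - 1) with hq
  have hpq : p.HolderConjugate q := Real.HolderConjugate.conjExponent hp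
  have hq1 : 1 < q := hpq.symm.lt
  set a := M / ρ ^ q with ha
  have hρq : 0 < ρ ^ q := Real.rpow_pos_of_pos hρ _
  have ha0 : 0 < a := div_pos hM0 hρq
  have haρ : a * ρ ^ q = M := by rw [ha]; field_simp
  set c := a * q with hc
  have hc0 : 0 < c := by positivity
  set b := c ^ (p - 1) with hb
  have hb0 : 0 < b := Real.rpow_pos_of_pos hc0 _
  set κ := lp * (γ * M ^ (γ - 1)) with hκ
  -- the numerical inequality
  have hnum : N * b < κ := by
    have e1 : b = M ^ (p - 1) * q ^ (p - 1) / ρ ^ p := by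
      rw [hb, hc, ha, div_mul_eq_mul_div, Real.div_rpow (by positivity) hρq.le,
        Real.mul_rpow hM0.le (by positivity), ← Real.rpow_mul hρ.le]
      have : q * (p - 1) = p := by rw [hq]; field_simp [show p - 1 ≠ 0 by linarith]
      rw [this]
    have e2 : M ^ (p - 1) = M ^ (p - γ) * M ^ (γ - 1) := by
      rw [← Real.rpow_add hM0]; ring_nf
    have hρp : 0 < ρ ^ p := Real.rpow_pos_of_pos hρ _
    have hMg : 0 < M ^ (γ - 1) := Real.rpow_pos_of_pos hM0 _
    rw [e1, e2, ← mul_div_assoc, div_lt_iff₀ hρp, hκ]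
    nlinarith [mul_lt_mul_of_pos_right hcon hMg]
  -- Lipschitz bound on u
  have hgu : ∀ x, ‖gradient u x‖ = ‖fderiv ℝ u x‖ := by
    intro x; rw [← toDual_gradient]; exact ((InnerProductSpace.toDual ℝ _).norm_map _).symm
  have hgcB : ContinuousOn (fun x => gradient u x) (closedBall y ρ) := hgc.mono hsub
  have hucB : ContinuousOn u (closedBall y ρ) :=
    fun x hx => (hdiff x (hsub hx)).continuousAt.continuousWithinAt
  obtain ⟨L, hL⟩ : ∃ L : NNReal, LipschitzOnWith L u (closedBall y ρ) := by
    obtain ⟨C, hC⟩ := (isCompact_closedBall y ρ).exists_bound_of_continuousOn hgcB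
    refine ⟨C.toNNReal, Convex.lipschitzOnWith_of_nnnorm_fderiv_le (𝕜 := ℝ)
      (fun x hx => hdiff x (hsub hx)) ?_ (convex_closedBall y ρ)⟩
    intro x hx
    have := hC x hx
    rw [hgu] at this
    rw [← NNReal.coe_le_coe]
    exact this.trans (Real.le_coe_toNNReal C)
  obtain ⟨ut, hut, hutu⟩ := hL.extend_real
  obtain ⟨Kw, hKw⟩ := ap_wlip hq1 hρ ha0 y
  set W : EuclideanSpace ℝ (Fin N) → ℝ := fun x => a * ‖x - y‖ ^ q with hW
  set φ : EuclideanSpace ℝ (Fin N) → ℝ :=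
    fun x => max (min (ut x) M - a * (min ‖x - y‖ ρ) ^ q) 0 with hφ
  have hφL : LipschitzWith (L + Kw) φ := ((hut.min_const M).sub hKw).max_const 0
  have hφ0 : ∀ x, 0 ≤ φ x := fun x => le_max_right _ _
  have hφin : ∀ x ∈ closedBall y ρ, φ x = max (u x - W x) 0 := by
    intro x hx
    have h1 : ‖x - y‖ ≤ ρ := by simpa [dist_eq_norm] using hx
    simp only [hφ, hW, ← hutu hx, min_eq_left (hM x hx), min_eq_left h1]
  have hφout : ∀ x, x ∉ ball y ρ → φ x = 0 := by
    intro x hx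
    have h1 : ρ ≤ ‖x - y‖ := by simpa [dist_eq_norm] using hx
    simp only [hφ, min_eq_right h1, haρ]
    exact max_eq_right (by linarith [min_le_right (ut x) M])
  have hφc : HasCompactSupport φ := by
    refine HasCompactSupport.of_support_subset_isCompact (isCompact_closedBall y ρ) ?_
    intro x hx
    by_contra h
    exact hx (hφout x fun h' => h (ball_subset_closedBall h'))
  have hφz : ∀ x, φ x = 0 → fderiv ℝ φ x = 0 := by
    intro x hx
    refine IsLocalMin.fderiv_eq_zero ?_
    exact Filter.Eventually.of_forall fun z => by rw [hx]; exact hφ0 z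
  have hWg : ∀ x, HasGradientAt W ((c * ‖x - y‖ ^ (q - 2)) • (x - y)) x := by
    intro x
    rw [hasGradientAt_iff_hasFDerivAt]
    have h1 := (hasFDerivAt_norm_rpow (x - y) hq1).comp x ((hasFDerivAt_id x).sub_const y)
    have h2 := h1.const_mul a
    refine h2.congr_fderiv ?_
    ext z
    simp [hc, inner_smul_left]
    ring
  have hWc : Continuous W := by
    have : Continuous (fun x : EuclideanSpace ℝ (Fin N) => ‖x - y‖ ^ q) :=
      (by fun_prop : Continuous fun x : EuclideanSpace ℝ (Fin N) => ‖x - y‖).rpow_const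
        (fun _ => Or.inr (by linarith))
    exact this.const_mul a
  have hgW : ∀ x, ‖gradient W x‖ = c * ‖x - y‖ ^ (q - 1) := by
    intro x
    rw [(hWg x).gradient, norm_smul, Real.norm_of_nonneg (by positivity), mul_assoc]
    congr 1
    rw [← Real.rpow_add_one' (norm_nonneg _) (by linarith)]
    ring_nf
  have hFc : Continuous (Fgam γ lp lm) := by
    unfold Fgam
    refine Continuous.add ?_ ?_
    · exact ((by fun_prop : Continuous fun t : ℝ => max t 0).rpow_const
        (fun _ => Or.inr hγ0.le)).const_mul lp
    · exact ((by fun_prop : Continuous fun t : ℝ => max (-t) 0).rpow_const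
        (fun _ => Or.inr hγ0.le)).const_mul lm
  set v : EuclideanSpace ℝ (Fin N) → ℝ := fun x => u x - φ x with hv
  set Eu : EuclideanSpace ℝ (Fin N) → ℝ :=
    fun x => ‖gradient u x‖ ^ p / p + Fgam γ lp lm (u x) with hEu
  set EW : EuclideanSpace ℝ (Fin N) → ℝ :=
    fun x => ‖gradient W x‖ ^ p / p + Fgam γ lp lm (W x) with hEW
  have hEui : IntegrableOn Eu (ball y ρ) := by
    refine IntegrableOn.mono_set (ContinuousOn.integrableOn_compact
      (isCompact_closedBall y ρ) ?_) ball_subset_closedBall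
    refine ContinuousOn.add (ContinuousOn.div_const ?_ p) (hFc.comp_continuousOn hucB)
    exact hgcB.norm.rpow_const (fun _ _ => Or.inr (by linarith))
  have hEWi : IntegrableOn EW (ball y ρ) := by
    refine IntegrableOn.mono_set (ContinuousOn.integrableOn_compact
      (isCompact_closedBall y ρ) (Continuous.continuousOn ?_)) ball_subset_closedBall
    refine Continuous.add (Continuous.div_const ?_ p) (hFc.comp hWc)
    simp only [hgW]
    refine Continuous.rpow_const (Continuous.const_mul ?_ c) (fun _ => Or.inr (by linarith))
    exact (by fun_prop : Continuous fun x : EuclideanSpace ℝ (Fin N) => ‖x - y‖).rpow_const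
        (fun _ => Or.inr (by linarith))
  have hmeas : MeasurableSet {x | 0 < φ x} :=
    (isOpen_lt continuous_const hφL.continuous).measurableSet
  classical
  set G : EuclideanSpace ℝ (Fin N) → ℝ := {x | 0 < φ x}.piecewise EW Eu with hG
  have hGi : IntegrableOn G (ball y ρ) := by
    refine Integrable.piecewise hmeas ?_ ?_
    · exact hEWi.integrable.integrableOn
    · exact hEui.integrable.integrableOn
  have hcl : closure (ball y ρ) = closedBall y ρ := closure_ball y hρ.ne'
  have hle := hmin y ρ hρ (by rw [hcl]; exact hsub) v (L + (L + Kw))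
    (by rw [hcl]; exact hL.sub hφL.lipschitzOnWith)
    (by
      intro x hx
      have : x ∉ ball y ρ := by
        rw [mem_ball, mem_sphere.1 hx]; exact lt_irrefl _
      simp [hv, hφout x this])
  -- near points where φ > 0
  have hpos : ∀ x ∈ ball y ρ, 0 < φ x → φ =ᶠ[nhds x] fun z => u z - W z := by
    intro x hx h
    filter_upwards [isOpen_ball.mem_nhds hx,
      (isOpen_lt continuous_const hφL.continuous).mem_nhds h] with z hz hz2
    have := hφin z (ball_subset_closedBall hz)
    rw [this]
    have hz2 : 0 < φ z := hz2
    rw [this] at hz2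
    rcases lt_max_iff.1 hz2 with h | h
    · exact max_eq_left h.le
    · exact absurd h (lt_irrefl _)
  have hvG : ∫ x in ball y ρ, (‖gradient v x‖ ^ p / p + Fgam γ lp lm (v x)) =
      ∫ x in ball y ρ, G x := by
    refine setIntegral_congr_ae measurableSet_ball ?_
    filter_upwards [hφL.ae_differentiableAt (μ := volume)] with x hx hxb
    rcases (hφ0 x).lt_or_eq with h | h
    · have hGx : G x = EW x := piecewise_eq_of_mem _ _ _ h
      have hvW : v =ᶠ[nhds x] W := by
        filter_upwards [hpos x hxb h] with z hz
        simp [hv, hz]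
      rw [hGx, hvW.gradient_eq, hvW.eq_of_nhds]
    · have hGx : G x = Eu x := piecewise_eq_of_notMem _ _ _ (by simp [← h])
      have h1 : gradient v x = gradient u x := by
        unfold gradient
        congr 1
        have := fderiv_sub (hdiff x (hsub (ball_subset_closedBall hxb))) hx
        rw [hφz x h.symm, sub_zero] at this
        exact this
      rw [hGx, h1]
      simp [hv, hEu, ← h]
  rw [hvG] at hle
  have hpt : ∀ x ∈ ball y ρ, G x + (b * fderiv ℝ φ x (x - y) + κ * φ x) ≤ Eu x := by
    intro x hxb
    rcases (hφ0 x).lt_or_eq with h | h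
    · have hGx : G x = EW x := piecewise_eq_of_mem _ _ _ h
      have hev := hpos x hxb h
      have hux := hdiff x (hsub (ball_subset_closedBall hxb))
      have hfd : fderiv ℝ φ x (x - y) = ⟪x - y, gradient u x - gradient W x⟫_ℝ := by
        have e : HasFDerivAt (fun z => u z - W z) (fderiv ℝ u x - fderiv ℝ W x) x :=
          hux.hasFDerivAt.sub (hWg x).differentiableAt.hasFDerivAt
        rw [hev.fderiv_eq, e.fderiv, inner_sub_right, inner_gradient_right, inner_gradient_right]
        simp
      have hφx : φ x = u x - W x := hev.eq_of_nhds
      have hW0 : 0 ≤ W x := by simp only [hW]; positivity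
      have hWu : W x < u x := by linarith
      have h1 := ap_young hpq hc0 (x - y) (gradient u x) (gradient W x) (hWg x).gradient
      have h2 := ap_concave hγ0 hγ1 hW0 hWu (hM x (ball_subset_closedBall hxb))
      have hF : ∀ t, 0 ≤ t → Fgam γ lp lm t = lp * t ^ γ := by
        intro t ht
        simp [Fgam, max_eq_left ht, ht, Real.zero_rpow hγ0.ne']
      have h3 := mul_le_mul_of_nonneg_left h2 hlp.le
      rw [hGx, hfd, hφx]
      simp only [hEW, hEu, hF _ hW0, hF _ (hW0.trans hWu.le), hκ]
      nlinarith
    · have hGx : G x = Eu x := piecewise_eq_of_notMem _ _ _ (by simp [← h])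
      rw [hGx, hφz x h.symm, ← h]
      simp
  have hfi := ap_integrable_fderiv hφL hφc (v := fun x => x - y) (by fun_prop)
  have hφi : Integrable φ := hφL.continuous.integrable_of_hasCompactSupport hφc
  have hRi : IntegrableOn (fun x => b * fderiv ℝ φ x (x - y) + κ * φ x) (ball y ρ) :=
    ((hfi.const_mul b).add (hφi.const_mul κ)).integrableOn
  have hint : ∫ x in ball y ρ, (G x + (b * fderiv ℝ φ x (x - y) + κ * φ x)) ≤
      ∫ x in ball y ρ, Eu x :=
    setIntegral_mono_on (hGi.add hRi) hEui measurableSet_ball hpt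
  rw [integral_add hGi hRi] at hint
  have hR : ∫ x in ball y ρ, (b * fderiv ℝ φ x (x - y) + κ * φ x) =
      (κ - N * b) * ∫ x, φ x := by
    rw [setIntegral_eq_integral_of_forall_compl_eq_zero]
    · rw [integral_add (hfi.const_mul b) (hφi.const_mul κ), integral_const_mul,
        integral_const_mul, ap_ibp hφL hφc]
      ring
    · intro x hx
      simp [hφz x (hφout x hx), hφout x hx]
  have hpi : 0 < ∫ x, φ x := by
    refine hφL.continuous.integral_pos_of_hasCompactSupport_nonneg_nonzero hφc hφ0 (x := y) ?_
    rw [hφin y (mem_closedBall_self hρ.le)]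
    have : W y = 0 := by simp [hW, Real.zero_rpow (by linarith : q ≠ 0)]
    rw [this, sub_zero, max_eq_left huy.le]
    exact huy.ne'
  have hfin : 0 < (κ - N * b) * ∫ x, φ x := mul_pos (by linarith) hpi
  rw [hR] at hint
  linarith

theorem ap_half (N : ℕ) (hN : 1 ≤ N) (p γ : ℝ)
    (hp : 1 < p) (hγ0 : 0 < γ) (hγ1 : γ ≤ 1) (hγp : γ < p) (lp : ℝ) (hlp : 0 < lp) :
    ∃ cp : ℝ, 0 < cp ∧ ∀ lm : ℝ,
      ∀ (Ω : Set (EuclideanSpace ℝ (Fin N))), IsOpen Ω →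
      ∀ u : EuclideanSpace ℝ (Fin N) → ℝ, APLocMin N p (Fgam γ lp lm) Ω u →
      ∀ x₀ ∈ Ω, x₀ ∈ closure {x ∈ Ω | 0 < u x} →
      ∀ r : ℝ, 0 < r → r < Metric.infDist x₀ (frontier Ω) →
        cp * r ^ (1 + γ / (p - γ)) ≤
          sSup ((fun x => max (u x) 0) '' Metric.ball x₀ r) := by
  have hN0 : (0:ℝ) < N := by exact_mod_cast hN
  have hq0 : 0 < p / (p - 1) := div_pos (by linarith) (by linarith)
  have hD : 0 < N * (p / (p - 1)) ^ (p - 1) := mul_pos hN0 (Real.rpow_pos_of_pos hq0 _)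
  set D := N * (p / (p - 1)) ^ (p - 1) with hDdef
  have hpg : 0 < p - γ := by linarith
  refine ⟨(lp * γ / D * (1 / 2) ^ p) ^ (1 / (p - γ)), by positivity, ?_⟩
  intro lm Ω hΩ u hu x₀ hx₀ hcl r hr hrd
  have hsub : closedBall x₀ r ⊆ Ω := by
    refine (convex_closedBall x₀ r).isPreconnected.subset_of_closure_inter_subset hΩ
      ⟨x₀, mem_closedBall_self hr.le, hx₀⟩ ?_
    rintro w ⟨hw, hw1⟩
    by_contra hwΩ
    have hw2 : w ∈ frontier Ω := by
      rw [hΩ.frontier_eq]; exact ⟨hw, hwΩ⟩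
    have := infDist_le_dist_of_mem (x := x₀) hw2
    rw [mem_closedBall, dist_comm] at hw1
    linarith
  obtain ⟨y, ⟨-, hy⟩, hyd⟩ := Metric.mem_closure_iff.1 hcl (r / 2) (by linarith)
  have hyb : closedBall y (r / 2) ⊆ ball x₀ r := by
    intro z hz
    rw [mem_closedBall] at hz
    rw [mem_ball]
    have := dist_triangle z y x₀
    rw [dist_comm] at hyd
    linarith
  have hbdd : BddAbove ((fun x => max (u x) 0) '' Metric.ball x₀ r) := by
    have hc : ContinuousOn (fun x => max (u x) 0) (closedBall x₀ r) := by
      refine ContinuousOn.sup ?_ continuousOn_const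
      exact fun x hx => (hu.1 x (hsub hx)).continuousAt.continuousWithinAt
    exact ((isCompact_closedBall x₀ r).bddAbove_image hc).mono (image_mono ball_subset_closedBall)
  set M := sSup ((fun x => max (u x) 0) '' Metric.ball x₀ r) with hM
  have hMx : ∀ x ∈ ball x₀ r, max (u x) 0 ≤ M := fun x hx => le_csSup hbdd (mem_image_of_mem _ hx)
  have hM0 : 0 ≤ M := (le_max_right _ _).trans (hMx x₀ (mem_ball_self hr))
  have h := ap_main hp hγ0 hγ1 hlp hu (half_pos hr)
    (hyb.trans (ball_subset_closedBall.trans hsub)) hy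
    (fun x hx => (le_max_left _ _).trans (hMx x (hyb hx)))
  have h1 : lp * γ / D * (1 / 2) ^ p * r ^ p ≤ M ^ (p - γ) := by
    have e : (r / 2) ^ p = (1 / 2) ^ p * r ^ p := by
      rw [← Real.mul_rpow (by norm_num) hr.le]; ring_nf
    rw [e] at h
    have : lp * γ / D * (1 / 2) ^ p * r ^ p = (lp * γ * ((1 / 2) ^ p * r ^ p)) / D := by ring
    rw [this, div_le_iff₀ hD]
    linarith
  have h2 := Real.rpow_le_rpow (by positivity) h1 (by positivity : 0 ≤ 1 / (p - γ))
  rw [← Real.rpow_mul hM0, mul_one_div_cancel hpg.ne', Real.rpow_one,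
    Real.mul_rpow (by positivity) (by positivity), ← Real.rpow_mul hr.le] at h2
  have e : 1 + γ / (p - γ) = p * (1 / (p - γ)) := by field_simp; ring
  rw [e]
  exact h2

theorem ap_neg {N : ℕ} {p γ lp lm : ℝ} {Ω : Set (EuclideanSpace ℝ (Fin N))}
    {u : EuclideanSpace ℝ (Fin N) → ℝ} (hu : APLocMin N p (Fgam γ lp lm) Ω u) :
    APLocMin N p (Fgam γ lm lp) Ω (fun x => - u x) := by
  have hg : ∀ (w : EuclideanSpace ℝ (Fin N) → ℝ) x,
      gradient (fun x => - w x) x = - gradient w x := by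
    intro w x
    unfold gradient
    rw [fderiv_fun_neg, map_neg]
  have hF : ∀ t, Fgam γ lm lp (-t) = Fgam γ lp lm t := by
    intro t; unfold Fgam; rw [neg_neg]; ring
  obtain ⟨h1, h2, h3, h4⟩ := hu
  refine ⟨fun x hx => (h1 x hx).fun_neg, ?_, ?_, ?_⟩
  · simp only [hg]; exact h2.neg
  · simp only [hg, norm_neg]; exact h3
  · intro z r hr hcl v K hv he
    have := h4 z r hr hcl (fun x => - v x) K hv.neg (fun x hx => by simp [he hx])
    simp only [hg, norm_neg, hF]
    have hF' : ∀ t, Fgam γ lp lm (-t) = Fgam γ lm lp t := by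
      intro t; unfold Fgam; rw [neg_neg]; ring
    simpa only [hg, norm_neg, hF'] using this

/-- Nondegeneracy: near points of the closure of a phase, a local minimizer grows at
least like `r^{1+τ}`, `τ = γ/(p-γ)`, with constants depending only on `N, p, γ` and
the corresponding `λ`. -/
theorem stmt4 (N : ℕ) (hN : 1 ≤ N) (p γ : ℝ)
    (hp : 1 < p) (hγ0 : 0 < γ) (hγ1 : γ ≤ 1) (hγp : γ < p) :
    (∀ lp : ℝ, 0 < lp → ∃ cp : ℝ, 0 < cp ∧ ∀ lm : ℝ, 0 < lm →
      ∀ (Ω : Set (EuclideanSpace ℝ (Fin N))), IsOpen Ω → Bornology.IsBounded Ω →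
      ∀ u : EuclideanSpace ℝ (Fin N) → ℝ, APLocMin N p (Fgam γ lp lm) Ω u →
      ∀ x₀ ∈ Ω, x₀ ∈ closure {x ∈ Ω | 0 < u x} →
      ∀ r : ℝ, 0 < r → r < Metric.infDist x₀ (frontier Ω) →
        cp * r ^ (1 + γ / (p - γ)) ≤
          sSup ((fun x => max (u x) 0) '' Metric.ball x₀ r)) ∧
    (∀ lm : ℝ, 0 < lm → ∃ cm : ℝ, 0 < cm ∧ ∀ lp : ℝ, 0 < lp →
      ∀ (Ω : Set (EuclideanSpace ℝ (Fin N))), IsOpen Ω → Bornology.IsBounded Ω →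
      ∀ u : EuclideanSpace ℝ (Fin N) → ℝ, APLocMin N p (Fgam γ lp lm) Ω u →
      ∀ x₀ ∈ Ω, x₀ ∈ closure {x ∈ Ω | u x < 0} →
      ∀ r : ℝ, 0 < r → r < Metric.infDist x₀ (frontier Ω) →
        cm * r ^ (1 + γ / (p - γ)) ≤
          sSup ((fun x => max (-u x) 0) '' Metric.ball x₀ r)) := by
  refine ⟨fun lp hlp => ?_, fun lm hlm => ?_⟩
  · obtain ⟨cp, h0, h⟩ := ap_half N hN p γ hp hγ0 hγ1 hγp lp hlp
    exact ⟨cp, h0, fun lm _ Ω hΩ _ u hu x₀ hx₀ hc r hr hrd =>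
      h lm Ω hΩ u hu x₀ hx₀ hc r hr hrd⟩
  · obtain ⟨cp, h0, h⟩ := ap_half N hN p γ hp hγ0 hγ1 hγp lm hlm
    exact ⟨cp, h0, fun lp _ Ω hΩ _ u hu x₀ hx₀ hc r hr hrd =>
      h lp Ω hΩ (fun x => - u x) (ap_neg hu) x₀ hx₀ (by simpa using hc) r hr hrd⟩
end

section
/- Let N ≥ 1, 2 ≤ p < ∞, 0 < γ < p, λ₊, λ₋ > 0, δ₀ > 0, M > 0. There exists C > 0, depending only on N, p, γ, λ₊, λ₋, δ₀ and M, with the following property. Let Ω ⊆ ℝ^N be open and bounded, δ ∈ [0, δ₀], and let u be a local minimizer of J_δ on Ω with closure(B_{4R}(x₀)) ⊆ Ω and sup_{B_{4R}(x₀)} |u| ≤ M. Let ū ∈ C¹(B_{2R}(x₀)) ∩ C(closure(B_{2R}(x₀))) satisfy: (i) ∫ |∇ū|^{p−2} ∇ū·∇φ dx = 0 for all φ ∈ C_c^∞(B_{2R}(x₀)); (ii) ū = u on ∂B_{2R}(x₀); (iii) sup_{B_{2R}(x₀)} |ū| ≤ sup_{B_{2R}(x₀)} |u|; (iv) ∫_{B_{2R}(x₀)}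 |∇ū|^p dx ≤ ∫_{B_{2R}(x₀)} |∇u|^p dx < ∞; (v) ∫_{B_{2R}(x₀)} (|∇u|^p/p + δ F_γ(u)) dx ≤ ∫_{B_{2R}(x₀)} (|∇ū|^p/p + δ F_γ(ū)) dx. Then ∫_{B_R(x₀)} |∇u − ∇ū|² dx ≤ C R^{N + 2γ/(p−γ)} if 0 < γ ≤ 1, and ∫_{B_R(x₀)} |∇u − ∇ū|² dx ≤ C R^{N + 2/(p−1)} if 1 ≤ γ < p. -/
open MeasureTheory Metric Set
open scoped InnerProductSpace

lemma scalar_conv {p : ℝ} (hp : 2 ≤ p) {r s : ℝ} (hr : 0 ≤ r) (hs : 0 ≤ s) :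
    r ^ p + p * (r ^ (p - 2) * (r * s - r ^ 2)) ≤ s ^ p := by
  rcases hr.eq_or_lt with rfl | hr
  · have : (0:ℝ) ^ p = 0 := Real.zero_rpow (by linarith)
    simp [this]
    positivity
  · have h := one_add_mul_self_le_rpow_one_add (s := s / r - 1) (by
      have : 0 ≤ s / r := by positivity
      linarith) (p := p) (by linarith)
    have e : 1 + (s / r - 1) = s / r := by ring
    rw [e, Real.div_rpow hs hr.le, le_div_iff₀ (by positivity)] at h
    have e2 : r ^ p = r ^ (p - 2) * r ^ 2 := by
      rw [← Real.rpow_natCast, ← Real.rpow_add hr]; norm_num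
    calc _ = (1 + p * (s / r - 1)) * r ^ p := by
          rw [e2]; field_simp
      _ ≤ _ := h

lemma vec_conv {E : Type*} [NormedAddCommGroup E] [InnerProductSpace ℝ E] {p : ℝ} (hp : 2 ≤ p)
    (η ζ : E) : ‖η‖ ^ p + p * (‖η‖ ^ (p - 2) * ⟪η, ζ - η⟫_ℝ) ≤ ‖ζ‖ ^ p := by
  refine le_trans ?_ (scalar_conv hp (norm_nonneg η) (norm_nonneg ζ))
  have : ⟪η, ζ - η⟫_ℝ ≤ ‖η‖ * ‖ζ‖ - ‖η‖ ^ 2 := by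
    rw [inner_sub_right, real_inner_self_eq_norm_sq]
    linarith [real_inner_le_norm η ζ]
  gcongr

lemma clarkson {E : Type*} [NormedAddCommGroup E] [InnerProductSpace ℝ E] {p : ℝ} (hp : 2 ≤ p)
    (a b : E) : ‖(1/2:ℝ) • (a + b)‖ ^ p + ‖(1/2:ℝ) • (a - b)‖ ^ p ≤ (‖a‖ ^ p + ‖b‖ ^ p) / 2 := by
  have key : ∀ x : E, ‖x‖ ^ p = (‖x‖ ^ 2) ^ (p / 2) := fun x => by
    rw [← Real.rpow_natCast, ← Real.rpow_mul (norm_nonneg _)]; congr 1; push_cast; ring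
  have h1 : ∀ x y : ℝ, 0 ≤ x → 0 ≤ y → x ^ (p/2) + y ^ (p/2) ≤ (x + y) ^ (p/2) := by
    intro x y hx hy
    lift x to NNReal using hx
    lift y to NNReal using hy
    exact_mod_cast NNReal.add_rpow_le_rpow_add x y (by linarith)
  have h2 := (convexOn_rpow (p := p/2) (by linarith)).2 (show ‖a‖^2 ∈ Ici (0:ℝ) by simp)
    (show ‖b‖^2 ∈ Ici (0:ℝ) by simp) (show (0:ℝ) ≤ 1/2 by norm_num)
    (show (0:ℝ) ≤ 1/2 by norm_num) (by norm_num)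
  simp only [smul_eq_mul] at h2
  rw [key, key, key a, key b]
  refine (h1 _ _ (by positivity) (by positivity)).trans ?_
  have e : ‖(1/2:ℝ) • (a + b)‖ ^ 2 + ‖(1/2:ℝ) • (a - b)‖ ^ 2 = 1/2 * ‖a‖^2 + 1/2 * ‖b‖^2 := by
    have := parallelogram_law_with_norm ℝ a b
    rw [norm_smul, norm_smul]; norm_num; nlinarith
  rw [e]; linarith

lemma unif_conv {E : Type*} [NormedAddCommGroup E] [InnerProductSpace ℝ E] {p : ℝ} (hp : 2 ≤ p)
    (η ξ : E) : ‖η‖ ^ p + p * (‖η‖ ^ (p - 2) * ⟪η, ξ - η⟫_ℝ) + 2 * (1/2:ℝ) ^ p * ‖ξ - η‖ ^ p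
      ≤ ‖ξ‖ ^ p := by
  have h1 := clarkson hp ξ η
  have h2 := vec_conv hp η ((1/2:ℝ) • (ξ + η))
  have e : (1/2:ℝ) • (ξ + η) - η = (1/2:ℝ) • (ξ - η) := by
    module
  rw [e, inner_smul_right] at h2
  rw [norm_smul (1/2:ℝ) (ξ - η), Real.mul_rpow (by positivity) (by positivity)] at h1
  norm_num at h1 h2 ⊢
  nlinarith

lemma rpow_sub_le {a s t : ℝ} (ha : 0 < a) (ha1 : a ≤ 1) (hs : 0 ≤ s) (ht : 0 ≤ t) :
    |s ^ a - t ^ a| ≤ |s - t| ^ a := by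
  wlog h : t ≤ s generalizing s t
  · rw [abs_sub_comm, abs_sub_comm s]; exact this ht hs (le_of_not_ge h)
  have h3 : t ^ a ≤ s ^ a := by gcongr
  rw [abs_of_nonneg (by linarith), abs_of_nonneg (by linarith)]
  have := Real.rpow_add_le_add_rpow (show 0 ≤ s - t by linarith) ht ha.le ha1
  simp at this; linarith

lemma rpow_lip {g M s t : ℝ} (hg : 1 ≤ g) (hs : 0 ≤ s) (ht : 0 ≤ t) (hsM : s ≤ M) (htM : t ≤ M) :
    |s ^ g - t ^ g| ≤ g * M ^ (g - 1) * |s - t| := by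
  have := Convex.norm_image_sub_le_of_norm_hasDerivWithin_le (f := fun x : ℝ => x ^ g)
    (f' := fun x => g * x ^ (g - 1)) (s := Icc 0 M) (C := g * M ^ (g - 1)) (x := t) (y := s)
    (fun x _ => (Real.hasDerivAt_rpow_const (Or.inr hg)).hasDerivWithinAt)
    (fun x hx => by
      have h0 := hx.1
      rw [Real.norm_of_nonneg (by positivity)]
      have := Real.rpow_le_rpow hx.1 hx.2 (show 0 ≤ g - 1 by linarith)
      gcongr)
    (convex_Icc 0 M) ⟨ht, htM⟩ ⟨hs, hsM⟩
  simpa [Real.norm_eq_abs] using this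

lemma abs_max_sub (s t : ℝ) : |max s 0 - max t 0| ≤ |s - t| := by
  simpa using abs_max_sub_max_le_max s 0 t 0

lemma Fgam_holder {γ lp lm M : ℝ} (hγ : 0 < γ) (hlp : 0 < lp) (hlm : 0 < lm) (hM : 0 < M) :
    ∃ L, 0 < L ∧ ∀ s t, |s| ≤ M → |t| ≤ M →
      |Fgam γ lp lm s - Fgam γ lp lm t| ≤ L * |s - t| ^ (min γ 1) := by
  have main : ∃ L, 0 < L ∧ ∀ s t : ℝ, 0 ≤ s → 0 ≤ t → s ≤ M → t ≤ M →
      |s ^ γ - t ^ γ| ≤ L * |s - t| ^ (min γ 1) := by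
    rcases le_total γ 1 with h | h
    · refine ⟨1, one_pos, fun s t hs ht _ _ => ?_⟩
      rw [min_eq_left h, one_mul]; exact rpow_sub_le hγ h hs ht
    · refine ⟨γ * M ^ (γ - 1), by positivity, fun s t hs ht h1 h2 => ?_⟩
      rw [min_eq_right h, Real.rpow_one]; exact rpow_lip h hs ht h1 h2
  obtain ⟨L, hL, H⟩ := main
  refine ⟨(lp + lm) * L, by positivity, fun s t hs ht => ?_⟩
  have hm : 0 < min γ 1 := lt_min hγ one_pos
  obtain ⟨hs1, hs2⟩ := abs_le.1 hs
  obtain ⟨ht1, ht2⟩ := abs_le.1 ht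
  have h1 := H (max s 0) (max t 0) (le_max_right _ _) (le_max_right _ _)
    (max_le hs2 hM.le) (max_le ht2 hM.le)
  have h2 := H (max (-s) 0) (max (-t) 0) (le_max_right _ _) (le_max_right _ _)
    (max_le (by linarith) hM.le) (max_le (by linarith) hM.le)
  have h3 : |max s 0 - max t 0| ^ (min γ 1) ≤ |s - t| ^ (min γ 1) :=
    Real.rpow_le_rpow (abs_nonneg _) (abs_max_sub s t) hm.le
  have h4 : |max (-s) 0 - max (-t) 0| ^ (min γ 1) ≤ |s - t| ^ (min γ 1) := by
    refine Real.rpow_le_rpow (abs_nonneg _) ((abs_max_sub (-s) (-t)).trans ?_) hm.le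
    rw [show -s - -t = -(s - t) by ring, abs_neg]
  unfold Fgam
  calc _ = |lp * (max s 0 ^ γ - max t 0 ^ γ) + lm * (max (-s) 0 ^ γ - max (-t) 0 ^ γ)| := by
        congr 1; ring
    _ ≤ lp * |max s 0 ^ γ - max t 0 ^ γ| + lm * |max (-s) 0 ^ γ - max (-t) 0 ^ γ| := by
        refine (abs_add_le _ _).trans ?_
        rw [abs_mul, abs_mul, abs_of_pos hlp, abs_of_pos hlm]
    _ ≤ lp * (L * |s - t| ^ (min γ 1)) + lm * (L * |s - t| ^ (min γ 1)) := by
        gcongr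
        · exact h1.trans (by gcongr)
        · exact h2.trans (by gcongr)
    _ = _ := by ring

lemma Fgam_cont {γ lp lm : ℝ} (hγ : 0 < γ) : Continuous (Fgam γ lp lm) := by
  unfold Fgam
  refine (continuous_const.mul ?_).add (continuous_const.mul ?_)
  · exact (continuous_id.max continuous_const).rpow_const (fun _ => Or.inr hγ.le)
  · exact (continuous_neg.max continuous_const).rpow_const (fun _ => Or.inr hγ.le)

lemma jensen_pow {X : Type*} [MeasurableSpace X] {μ : Measure X} {s : Set X} (hs : μ s ≠ 0)
    (hs' : μ s ≠ ⊤) {g : X → ℝ} (hg : IntegrableOn g s μ) (hg0 : ∀ x, 0 ≤ g x) {q : ℝ}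
    (hq : 0 < q) (hq1 : q ≤ 1) :
    IntegrableOn (fun x => g x ^ q) s μ ∧
    ∫ x in s, g x ^ q ∂μ ≤ (μ.real s) ^ (1 - q) * (∫ x in s, g x ∂μ) ^ q := by
  have hi : IntegrableOn (fun x => g x ^ q) s μ := by
    have : IntegrableOn (fun x => 1 + g x) s μ := by
      refine Integrable.add ?_ hg
      exact integrableOn_const hs'
    refine this.mono' (hg.aestronglyMeasurable.aemeasurable.pow_const q).aestronglyMeasurable ?_
    refine Filter.Eventually.of_forall fun x => ?_
    have h0 := hg0 x
    rw [Real.norm_of_nonneg (by positivity)]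
    rcases le_total (g x) 1 with h | h
    · linarith [Real.rpow_le_one h0 h hq.le]
    · have := Real.rpow_le_rpow_of_exponent_le h hq1
      rw [Real.rpow_one] at this; linarith
  refine ⟨hi, ?_⟩
  have J := (Real.concaveOn_rpow hq.le hq1).le_map_set_average (μ := μ) (t := s) (f := g)
    (Real.continuous_rpow_const hq.le).continuousOn isClosed_Ici hs hs'
    (Filter.Eventually.of_forall fun x => hg0 x) hg hi
  have hV : 0 < μ.real s := ENNReal.toReal_pos hs hs'
  have hI : 0 ≤ ∫ x in s, g x ∂μ := integral_nonneg hg0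
  rw [setAverage_eq, setAverage_eq, smul_eq_mul, smul_eq_mul,
    Real.mul_rpow (by positivity) hI, Real.inv_rpow hV.le, inv_mul_le_iff₀ hV] at J
  refine J.trans (le_of_eq ?_)
  rw [Real.rpow_sub hV, Real.rpow_one]; ring

lemma exists_trunc : ∃ (T : ℝ → ℝ) (K : ℝ), ContDiff ℝ 1 T ∧ 0 < K ∧ (∀ t, |deriv T t| ≤ K) ∧
    (∀ t, |t| ≤ 1 → T t = 0) ∧ (∀ t, 2 < |t| → deriv T t = 1) ∧ (∀ t, |T t - t| ≤ 2) := by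
  set T : ℝ → ℝ := fun t => t * Real.smoothTransition (t ^ 2 - 1) with hT
  have hc : ContDiff ℝ 1 T := by
    refine contDiff_id.mul ?_
    exact (Real.smoothTransition.contDiff (n := 1)).comp ((contDiff_id.pow 2).sub contDiff_const)
  have hT1 : ∀ t, |t| ≤ 1 → T t = 0 := fun t ht => by
    have : t ^ 2 ≤ 1 := by rw [← sq_abs]; nlinarith [abs_nonneg t]
    simp [hT, Real.smoothTransition.zero_of_nonpos (show t ^ 2 - 1 ≤ 0 by linarith)]
  have hT2 : ∀ t, 2 ≤ |t| → T t = t := fun t ht => by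
    have : 4 ≤ t ^ 2 := by rw [← sq_abs]; nlinarith [abs_nonneg t]
    simp [hT, Real.smoothTransition.one_of_one_le (show 1 ≤ t ^ 2 - 1 by linarith)]
  have hT3 : ∀ t, 2 < |t| → deriv T t = 1 := fun t ht => by
    have : T =ᶠ[nhds t] id := by
      filter_upwards [(isOpen_lt continuous_const continuous_abs).mem_nhds ht] with s hs
      exact hT2 s (le_of_lt hs)
    rw [this.deriv_eq, deriv_id]
  have hd : Continuous (deriv T) := hc.continuous_deriv le_rfl
  obtain ⟨K, hK⟩ := isCompact_Icc.exists_bound_of_continuousOn (s := Icc (-2:ℝ) 2) hd.continuousOn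
  refine ⟨T, max K 1, hc, by positivity, fun t => ?_, hT1, hT3, fun t => ?_⟩
  · rcases le_or_gt |t| 2 with h | h
    · exact (hK t (abs_le.1 h)).trans (le_max_left _ _)
    · rw [hT3 t h]; simp
  · rcases le_or_gt |t| 2 with h | h
    · have h1 := Real.smoothTransition.nonneg (t ^ 2 - 1)
      have h2 := Real.smoothTransition.le_one (t ^ 2 - 1)
      have : T t - t = -(t * (1 - Real.smoothTransition (t ^ 2 - 1))) := by simp only [hT]; ring
      rw [this, abs_neg, abs_mul, abs_of_nonneg (show 0 ≤ 1 - Real.smoothTransition (t ^ 2 - 1) by linarith)]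
      nlinarith [abs_nonneg t]
    · rw [hT2 t h.le]; simp

lemma null_dir {N : ℕ} {U : Set (EuclideanSpace ℝ (Fin N))} (hU : IsOpen U)
    {v : EuclideanSpace ℝ (Fin N) → ℝ} (hv : ∀ x ∈ U, DifferentiableAt ℝ v x)
    (e : EuclideanSpace ℝ (Fin N)) :
    ∀ᵐ x, x ∈ U → v x = 0 → fderiv ℝ v x e = 0 := by
  have hvc : ContinuousOn v U := fun x hx => (hv x hx).continuousAt.continuousWithinAt
  let L : ℝ →L[ℝ] EuclideanSpace ℝ (Fin N) := ContinuousLinearMap.smulRight (1 : ℝ →L[ℝ] ℝ) e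
  let s : Set (EuclideanSpace ℝ (Fin N)) := {x | x ∈ U → v x = 0 → fderiv ℝ v x e = 0}
  have hs : MeasurableSet s := by
    have e1 : s = Uᶜ ∪ (U ∩ v ⁻¹' {0}ᶜ) ∪ {x | fderiv ℝ v x e = 0} := by
      ext x; simp only [s, mem_ofPred_eq, mem_union, mem_compl_iff, mem_inter_iff, mem_preimage,
        mem_singleton_iff]; tauto
    rw [e1]
    refine (hU.measurableSet.compl.union ?_).union ?_
    · exact (hvc.isOpen_inter_preimage hU isOpen_compl_singleton).measurableSet
    · exact (measurable_fderiv_apply_const ℝ v e) (measurableSet_singleton 0)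
  refine ae_mem_of_ae_add_linearMap_mem (s := s) L.toLinearMap volume volume hs fun y => ?_
  have hc : Set.Countable {t : ℝ | y + t • e ∉ s} := by
    refine (HereditarilyLindelofSpace.isLindelof _).countable_of_isDiscrete ?_
    rw [isDiscrete_iff_nhdsNE]
    intro t ht
    have ht' : y + t • e ∈ U ∧ v (y + t • e) = 0 ∧ fderiv ℝ v (y + t • e) e ≠ 0 := by
      simpa [s] using ht
    have hd : HasDerivAt (fun t : ℝ => v (y + t • e)) (fderiv ℝ v (y + t • e) e) t := by
      have h1 : HasDerivAt (fun t : ℝ => y + t • e) e t := by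
        simpa using ((hasDerivAt_id t).smul_const e).const_add y
      exact (hv _ ht'.1).hasFDerivAt.comp_hasDerivAt t h1
    have h2 := hd.eventually_ne (c := 0) ht'.2.2
    rw [← _root_.disjoint_iff, Filter.disjoint_principal_right]
    filter_upwards [h2] with t' h' h''
    have : y + t' • e ∈ U ∧ v (y + t' • e) = 0 ∧ fderiv ℝ v (y + t' • e) e ≠ 0 := by
      simpa [s] using h''
    exact h' this.2.1
  have := hc.ae_notMem volume
  filter_upwards [this] with t ht
  simpa [L] using ht

lemma null_grad {N : ℕ} {U : Set (EuclideanSpace ℝ (Fin N))} (hU : IsOpen U)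
    {v : EuclideanSpace ℝ (Fin N) → ℝ} (hv : ∀ x ∈ U, DifferentiableAt ℝ v x) :
    ∀ᵐ x, x ∈ U → v x = 0 → fderiv ℝ v x = 0 := by
  have : ∀ᵐ x, ∀ i : Fin N, x ∈ U → v x = 0 →
      fderiv ℝ v x (EuclideanSpace.basisFun (Fin N) ℝ i) = 0 :=
    ae_all_iff.2 fun i => null_dir hU hv _
  filter_upwards [this] with x hx h1 h2
  have := (EuclideanSpace.basisFun (Fin N) ℝ).toBasis.ext (f₁ := (fderiv ℝ v x).toLinearMap)
    (f₂ := 0) (fun i => by simpa using hx i h1 h2)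
  ext y
  exact congrArg (fun f : EuclideanSpace ℝ (Fin N) →ₗ[ℝ] ℝ => f y) this

lemma poincare_one {N : ℕ} (hN : 1 ≤ N) {φ : EuclideanSpace ℝ (Fin N) → ℝ} (hφ : ContDiff ℝ 1 φ)
    {x₀ : EuclideanSpace ℝ (Fin N)} {r : ℝ} (hr : 0 < r) (hs : ∀ x, x ∉ ball x₀ r → φ x = 0) :
    ∫ x, |φ x| ≤ 2 * r * ∫ x, ‖fderiv ℝ φ x‖ := by
  have hcs : HasCompactSupport φ := by
    refine HasCompactSupport.intro (isCompact_closedBall x₀ r) fun x hx => hs x fun h => hx ?_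
    exact ball_subset_closedBall h
  let e : EuclideanSpace ℝ (Fin N) := EuclideanSpace.single ⟨0, hN⟩ 1
  have he : ‖e‖ = 1 := by simp [e]
  have hdc : Continuous (fderiv ℝ φ) := hφ.continuous_fderiv one_ne_zero
  have pt : ∀ x, ‖φ x‖ₑ ≤ ∫⁻ t in Ioc 0 (2 * r), ‖fderiv ℝ φ (x + t • e)‖ₑ := by
    intro x
    by_cases hx : x ∈ ball x₀ r
    · have hx2 : φ (x + (2 * r) • e) = 0 := by
        apply hs
        intro h
        rw [mem_ball, dist_eq_norm] at h hx
        have : ‖(2 * r) • e‖ ≤ ‖x + (2 * r) • e - x₀‖ + ‖x - x₀‖ := by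
          have := norm_sub_le (x + (2 * r) • e - x₀) (x - x₀)
          rwa [show x + (2 * r) • e - x₀ - (x - x₀) = (2 * r) • e by abel] at this
        rw [norm_smul, he, Real.norm_of_nonneg (by positivity)] at this
        linarith
      have hd : ∀ t : ℝ, HasDerivAt (fun t : ℝ => φ (x + t • e)) (fderiv ℝ φ (x + t • e) e) t := by
        intro t
        have h1 : HasDerivAt (fun t : ℝ => x + t • e) e t := by
          simpa using ((hasDerivAt_id t).smul_const e).const_add x
        exact ((hφ.differentiable one_ne_zero) _).hasFDerivAt.comp_hasDerivAt t h1
      have hc : Continuous fun t : ℝ => fderiv ℝ φ (x + t • e) e := by fun_prop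
      have ftc := intervalIntegral.integral_eq_sub_of_hasDerivAt (a := 0) (b := 2 * r)
        (fun t _ => hd t) (hc.intervalIntegrable _ _)
      simp only [hx2, zero_smul, add_zero, zero_sub] at ftc
      rw [intervalIntegral.integral_of_le (by positivity)] at ftc
      rw [← enorm_neg, ← ftc]
      refine (enorm_integral_le_lintegral_enorm _).trans ?_
      refine lintegral_mono fun t => ?_
      rw [← ofReal_norm, ← ofReal_norm]
      refine ENNReal.ofReal_le_ofReal ?_
      simpa [he] using (fderiv ℝ φ (x + t • e)).le_opNorm e
    · simp [hs x hx]
  have hl : ∫⁻ x, ‖φ x‖ₑ ≤ ENNReal.ofReal (2 * r) * ∫⁻ x, ‖fderiv ℝ φ x‖ₑ := by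
    calc _ ≤ ∫⁻ x, ∫⁻ t in Ioc 0 (2 * r), ‖fderiv ℝ φ (x + t • e)‖ₑ := lintegral_mono pt
      _ = ∫⁻ t in Ioc 0 (2 * r), ∫⁻ x, ‖fderiv ℝ φ (x + t • e)‖ₑ := by
          refine lintegral_lintegral_swap ?_
          have : Continuous fun z : EuclideanSpace ℝ (Fin N) × ℝ =>
              ‖fderiv ℝ φ (z.1 + z.2 • e)‖ₑ := by
            refine continuous_enorm.comp (hdc.comp ?_); fun_prop
          exact this.measurable.aemeasurable
      _ = ∫⁻ t in Ioc 0 (2 * r), ∫⁻ x, ‖fderiv ℝ φ x‖ₑ := by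
          congr 1; ext t
          exact lintegral_add_right_eq_self (fun x => ‖fderiv ℝ φ x‖ₑ) (t • e)
      _ = _ := by simp [mul_comm]
  have i2 : Integrable (fderiv ℝ φ) := hdc.integrable_of_hasCompactSupport (hcs.fderiv ℝ)
  have h2 := i2.hasFiniteIntegral
  have h3 := ENNReal.toReal_mono (ENNReal.mul_ne_top ENNReal.ofReal_ne_top h2.ne) hl
  rw [ENNReal.toReal_mul, ENNReal.toReal_ofReal (by positivity)] at h3
  rw [integral_norm_eq_lintegral_enorm i2.aestronglyMeasurable]
  have h4 := integral_norm_eq_lintegral_enorm (μ := volume) (hφ.continuous.aestronglyMeasurable)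
  simp only [Real.norm_eq_abs] at h4
  rw [h4]; exact h3

lemma mollify_test {N : ℕ} {U : Set (EuclideanSpace ℝ (Fin N))} (hU : IsOpen U)
    {G : EuclideanSpace ℝ (Fin N) → EuclideanSpace ℝ (Fin N)} (hG : ContinuousOn G U)
    (hw : ∀ φ : EuclideanSpace ℝ (Fin N) → ℝ, ContDiff ℝ (⊤ : ℕ∞) φ → HasCompactSupport φ →
          tsupport φ ⊆ U → ∫ x in U, fderiv ℝ φ x (G x) = 0)
    {φ : EuclideanSpace ℝ (Fin N) → ℝ} (hφ : ContDiff ℝ 1 φ) (hcs : HasCompactSupport φ)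
    (hsub : tsupport φ ⊆ U) : ∫ x in U, fderiv ℝ φ x (G x) = 0 := by
  obtain ⟨d, hd, hdU⟩ := hcs.isCompact.exists_cthickening_subset_open hU hsub
  set K := cthickening d (tsupport φ) with hK
  have hKc : IsCompact K := hcs.isCompact.cthickening
  have hdc : Continuous (fderiv ℝ φ) := hφ.continuous_fderiv one_ne_zero
  let b : ℕ → ContDiffBump (0 : EuclideanSpace ℝ (Fin N)) := fun n =>
    ⟨d / (2 * (n + 1)), d / (n + 1), by positivity, by
      have : (0:ℝ) < n + 1 := by positivity
      gcongr; linarith⟩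
  have hb : ∀ n, (b n).rOut = d / (n + 1) := fun n => rfl
  have hbt : Filter.Tendsto (fun n => (b n).rOut) Filter.atTop (nhds 0) := by
    simp only [hb]
    have := (tendsto_one_div_add_atTop_nhds_zero_nat (𝕜 := ℝ)).const_mul d
    simpa [div_eq_mul_inv] using this
  let ψ : ℕ → EuclideanSpace ℝ (Fin N) → ℝ := fun n =>
    MeasureTheory.convolution ((b n).normed volume) φ (ContinuousLinearMap.lsmul ℝ ℝ) volume
  have hψs : ∀ n, ContDiff ℝ (⊤ : ℕ∞) (ψ n) := fun n =>
    (b n).hasCompactSupport_normed.contDiff_convolution_left _ (b n).contDiff_normed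
      hφ.continuous.locallyIntegrable
  have hψsup : ∀ n, tsupport (ψ n) ⊆ K := by
    intro n
    refine closure_minimal ?_ isClosed_cthickening
    refine (support_convolution_subset _).trans ?_
    rintro x ⟨y, hy, z, hz, rfl⟩
    rw [(b n).support_normed_eq, hb, mem_ball_zero_iff] at hy
    refine mem_cthickening_of_dist_le (y + z) z d _ (subset_closure hz) ?_
    have : d / (n + 1) ≤ d := div_le_self hd.le (by simp)
    simp only [dist_eq_norm, add_sub_cancel_right]
    linarith
  have hψc : ∀ n, HasCompactSupport (ψ n) := fun n =>
    hKc.of_isClosed_subset (isClosed_tsupport _) (hψsup n)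
  have hψd : ∀ n x, fderiv ℝ (ψ n) x = MeasureTheory.convolution ((b n).normed volume)
      (fderiv ℝ φ) (ContinuousLinearMap.lsmul ℝ ℝ) volume x := by
    intro n x
    have h := (hcs.hasFDerivAt_convolution_right (ContinuousLinearMap.lsmul ℝ ℝ) (μ := volume)
      (f := (b n).normed volume) (b n).continuous_normed.locallyIntegrable hφ x)
    rw [h.fderiv]
    congr 1
  have hlim : ∀ x, Filter.Tendsto (fun n => fderiv ℝ (ψ n) x) Filter.atTop (nhds (fderiv ℝ φ x)) := by
    intro x
    simp only [hψd]
    exact ContDiffBump.convolution_tendsto_right_of_continuous hbt hdc x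
  obtain ⟨S, hS⟩ := hdc.bounded_above_of_compact_support (hcs.fderiv ℝ)
  have hS0 : 0 ≤ S := (norm_nonneg _).trans (hS 0)
  have hbd : ∀ n x, ‖fderiv ℝ (ψ n) x‖ ≤ 3 * S := by
    intro n x
    have h := (b n).dist_normed_convolution_le (μ := volume) (g := fderiv ℝ φ) (x₀ := x) (ε := 2 * S)
      hdc.aestronglyMeasurable (fun y _ => by
        rw [dist_eq_norm]; refine (norm_sub_le _ _).trans ?_; linarith [hS x, hS y])
    rw [← hψd, dist_eq_norm] at h
    have := norm_le_norm_add_norm_sub' (fderiv ℝ (ψ n) x) (fderiv ℝ φ x)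
    linarith [hS x]
  have hz : ∀ n x, x ∉ K → fderiv ℝ (ψ n) x = 0 := by
    intro n x hx
    by_contra h
    exact hx (hψsup n (support_fderiv_subset ℝ (Function.mem_support.2 h)))
  have hT := tendsto_integral_of_dominated_convergence (μ := volume.restrict U)
    (F := fun n x => fderiv ℝ (ψ n) x (G x)) (f := fun x => fderiv ℝ φ x (G x))
    (K.indicator fun x => 3 * S * ‖G x‖) (fun n => ?_) ?_ (fun n => ?_) ?_
  · simp only [fun n => hw (ψ n) (hψs n) (hψc n) ((hψsup n).trans hdU)] at hT
    exact (tendsto_nhds_unique hT tendsto_const_nhds)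
  · refine ContinuousOn.aestronglyMeasurable ?_ hU.measurableSet
    exact (((hψs n).continuous_fderiv (by simp)).continuousOn).clm_apply hG
  · refine Integrable.mono_measure ?_ Measure.restrict_le_self
    rw [integrable_indicator_iff hKc.measurableSet]
    exact ((hG.mono hdU).norm.const_mul _).integrableOn_compact hKc
  · refine Filter.Eventually.of_forall fun x => ?_
    by_cases hx : x ∈ K
    · rw [indicator_of_mem hx]
      exact ((fderiv ℝ (ψ n) x).le_opNorm _).trans (by gcongr; exact hbd n x)
    · simp [hz n x hx, hx]
  · refine Filter.Eventually.of_forall fun x => ?_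
    exact ((ContinuousLinearMap.apply ℝ ℝ (G x)).continuous.tendsto _).comp (hlim x)

lemma trunc_test {N : ℕ} {x₀ : EuclideanSpace ℝ (Fin N)} {r : ℝ} (hr : 0 < r)
    {v : EuclideanSpace ℝ (Fin N) → ℝ} (hv : ∀ x ∈ ball x₀ r, DifferentiableAt ℝ v x)
    (hv' : ContinuousOn (fderiv ℝ v) (ball x₀ r)) (hvc : ContinuousOn v (closedBall x₀ r))
    (hv0 : ∀ x ∈ sphere x₀ r, v x = 0) {T : ℝ → ℝ} (hT : ContDiff ℝ 1 T)
    (hT1 : ∀ t, |t| ≤ 1 → T t = 0) {ε : ℝ} (hε : 0 < ε) :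
    ∃ φ : EuclideanSpace ℝ (Fin N) → ℝ, ContDiff ℝ 1 φ ∧ HasCompactSupport φ ∧
      tsupport φ ⊆ ball x₀ r ∧ (∀ x ∈ ball x₀ r, φ x = ε * T (v x / ε)) ∧
      (∀ x ∈ ball x₀ r, fderiv ℝ φ x = deriv T (v x / ε) • fderiv ℝ v x) ∧
      (∀ x, x ∉ ball x₀ r → φ x = 0 ∧ fderiv ℝ φ x = 0) := by
  classical
  let φ : EuclideanSpace ℝ (Fin N) → ℝ := fun x => if x ∈ ball x₀ r then ε * T (v x / ε) else 0
  have hin : ∀ x ∈ ball x₀ r, φ x = ε * T (v x / ε) := fun x hx => if_pos hx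
  have hev : ∀ x ∈ ball x₀ r, φ =ᶠ[nhds x] fun x => ε * T (v x / ε) := fun x hx => by
    filter_upwards [isOpen_ball.mem_nhds hx] with y hy using hin y hy
  have hout : ∀ x, x ∉ ball x₀ r → φ =ᶠ[nhds x] fun _ => 0 := by
    intro x hx
    by_cases hx2 : x ∈ closedBall x₀ r
    · have hxs : x ∈ sphere x₀ r := by
        rw [mem_sphere]; rw [mem_ball] at hx; rw [mem_closedBall] at hx2; linarith
      have h1 := (hvc x hx2).abs
      have h2 : ∀ᶠ y in nhdsWithin x (closedBall x₀ r), |v y| < ε :=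
        h1.eventually (gt_mem_nhds (by simpa [hv0 x hxs] using hε))
      rw [eventually_nhdsWithin_iff] at h2
      filter_upwards [h2] with y hy
      by_cases hyb : y ∈ ball x₀ r
      · rw [hin y hyb, hT1, mul_zero]
        rw [abs_div, abs_of_pos hε, div_le_one hε]
        exact (hy (ball_subset_closedBall hyb)).le
      · exact if_neg hyb
    · filter_upwards [isClosed_closedBall.isOpen_compl.mem_nhds hx2] with y hy
      exact if_neg fun h => hy (ball_subset_closedBall h)
  have hd : ∀ x ∈ ball x₀ r, HasFDerivAt φ (deriv T (v x / ε) • fderiv ℝ v x) x := by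
    intro x hx
    have h1 : HasFDerivAt (fun x => v x / ε) (ε⁻¹ • fderiv ℝ v x) x := by
      simpa [div_eq_mul_inv] using (hv x hx).hasFDerivAt.mul_const ε⁻¹
    have h2 := ((hT.differentiable one_ne_zero) (v x / ε)).hasDerivAt.comp_hasFDerivAt x h1
    have h3 := h2.const_mul ε
    refine (h3.congr_of_eventuallyEq (hev x hx)).congr_fderiv ?_
    have e : ε * (deriv T (v x / ε) * ε⁻¹) = deriv T (v x / ε) := by field_simp
    rw [smul_smul, smul_smul]
    congr 1
    linarith
  have hd0 : ∀ x, x ∉ ball x₀ r → HasFDerivAt φ (0 : EuclideanSpace ℝ (Fin N) →L[ℝ] ℝ) x := fun x hx =>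
    (hasFDerivAt_const (0:ℝ) x).congr_of_eventuallyEq (hout x hx)
  have hts : tsupport φ ⊆ ball x₀ r := by
    intro x hx
    by_contra h
    exact (notMem_tsupport_iff_eventuallyEq.2 (hout x h)) hx
  have hdT : Continuous (deriv T) := hT.continuous_deriv le_rfl
  refine ⟨φ, ?_, ?_, hts, hin, fun x hx => (hd x hx).fderiv,
    fun x hx => ⟨if_neg hx, (hd0 x hx).fderiv⟩⟩
  · rw [contDiff_one_iff_fderiv]
    refine ⟨fun x => ?_, continuous_iff_continuousAt.2 fun x => ?_⟩
    · by_cases hx : x ∈ ball x₀ r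
      · exact (hd x hx).differentiableAt
      · exact (hd0 x hx).differentiableAt
    · by_cases hx : x ∈ ball x₀ r
      · have hnh := isOpen_ball.mem_nhds hx
        have : ContinuousAt (fun y => (deriv T (v y / ε) • fderiv ℝ v y :
            EuclideanSpace ℝ (Fin N) →L[ℝ] ℝ)) x := by
          have hc1 : ContinuousAt (fun y => deriv T (v y / ε)) x :=
            hdT.continuousAt.comp ((hv x hx).continuousAt.div_const ε)
          exact hc1.smul (hv'.continuousAt hnh)
        refine this.congr ?_
        filter_upwards [hnh] with y hy using (hd y hy).fderiv.symm
      · have := (hout x hx).fderiv (𝕜 := ℝ)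
        refine (continuousAt_const (y := (0 : EuclideanSpace ℝ (Fin N) →L[ℝ] ℝ))).congr ?_
        filter_upwards [this] with y hy
        rw [hy]; simp
  · exact (isCompact_closedBall x₀ r).of_isClosed_subset (isClosed_tsupport _)
      (hts.trans ball_subset_closedBall)

lemma test_v {N : ℕ} {x₀ : EuclideanSpace ℝ (Fin N)} {r : ℝ} (hr : 0 < r)
    {v : EuclideanSpace ℝ (Fin N) → ℝ} (hv : ∀ x ∈ ball x₀ r, DifferentiableAt ℝ v x)
    (hv' : ContinuousOn (fderiv ℝ v) (ball x₀ r)) (hvc : ContinuousOn v (closedBall x₀ r))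
    (hv0 : ∀ x ∈ sphere x₀ r, v x = 0)
    {G : EuclideanSpace ℝ (Fin N) → EuclideanSpace ℝ (Fin N)} (hG : ContinuousOn G (ball x₀ r))
    (hw : ∀ φ : EuclideanSpace ℝ (Fin N) → ℝ, ContDiff ℝ (⊤ : ℕ∞) φ → HasCompactSupport φ →
          tsupport φ ⊆ ball x₀ r → ∫ x in ball x₀ r, fderiv ℝ φ x (G x) = 0)
    (hi : IntegrableOn (fun x => ‖fderiv ℝ v x‖ * ‖G x‖) (ball x₀ r)) :
    ∫ x in ball x₀ r, fderiv ℝ v x (G x) = 0 := by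
  obtain ⟨T, K, hT, hK, hTK, hT1, hT2, hT3⟩ := exists_trunc
  have hε : ∀ n : ℕ, (0:ℝ) < 1 / ((n:ℝ) + 1) := fun n => by positivity
  choose φ h1 h2 h3 h4 h5 h6 using fun n => trunc_test hr hv hv' hvc hv0 hT hT1 (hε n)
  have hlim := tendsto_integral_of_dominated_convergence (μ := volume.restrict (ball x₀ r))
    (F := fun n x => fderiv ℝ (φ n) x (G x)) (f := fun x => fderiv ℝ v x (G x))
    (fun x => K * (‖fderiv ℝ v x‖ * ‖G x‖)) (fun n => ?_) (hi.const_mul K) (fun n => ?_) ?_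
  · simp only [fun n => mollify_test isOpen_ball hG hw (h1 n) (h2 n) (h3 n)] at hlim
    exact tendsto_nhds_unique hlim tendsto_const_nhds
  · refine ContinuousOn.aestronglyMeasurable ?_ measurableSet_ball
    exact (((h1 n).continuous_fderiv one_ne_zero).continuousOn).clm_apply hG
  · refine (ae_restrict_iff' measurableSet_ball).2 (Filter.Eventually.of_forall fun x hx => ?_)
    rw [h5 n x hx]
    simp only [_root_.smul_apply, norm_smul, Real.norm_eq_abs (deriv T _)]
    have := (fderiv ℝ v x).le_opNorm (G x)
    have h0 := hTK (v x / (1 / ((n:ℝ) + 1)))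
    gcongr
  · refine (ae_restrict_iff' measurableSet_ball).2 ?_
    filter_upwards [null_grad isOpen_ball hv] with x hx hxb
    by_cases hx0 : v x = 0
    · simp only [fun n => h5 n x hxb, hx hxb hx0]
      simp
    · refine tendsto_const_nhds.congr' ?_
      obtain ⟨n0, hn0⟩ := exists_nat_gt (2 / |v x|)
      filter_upwards [Filter.eventually_ge_atTop n0] with n hn
      rw [h5 n x hxb, hT2, one_smul]
      have ha : 0 < |v x| := abs_pos.2 hx0
      rw [div_lt_iff₀ ha] at hn0
      have hn' : (n0:ℝ) ≤ n := by exact_mod_cast hn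
      rw [div_div_eq_mul_div, div_one, abs_mul, abs_of_pos (show (0:ℝ) < n + 1 by positivity)]
      nlinarith

lemma poincare_v : ∃ K : ℝ, 0 < K ∧ ∀ {N : ℕ} (hN : 1 ≤ N) {x₀ : EuclideanSpace ℝ (Fin N)}
    {r : ℝ} (hr : 0 < r)
    {v : EuclideanSpace ℝ (Fin N) → ℝ} (hv : ∀ x ∈ ball x₀ r, DifferentiableAt ℝ v x)
    (hv' : ContinuousOn (fderiv ℝ v) (ball x₀ r)) (hvc : ContinuousOn v (closedBall x₀ r))
    (hv0 : ∀ x ∈ sphere x₀ r, v x = 0)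
    (hi : IntegrableOn (fun x => ‖fderiv ℝ v x‖) (ball x₀ r)),
    ∫ x in ball x₀ r, |v x| ≤ K * r * ∫ x in ball x₀ r, ‖fderiv ℝ v x‖ := by
  obtain ⟨T, K, hT, hK, hTK, hT1, hT2, hT3⟩ := exists_trunc
  refine ⟨2 * K, by positivity, fun {N} hN {x₀ r} hr {v} hv hv' hvc hv0 hi => ?_⟩
  have hiv : IntegrableOn (fun x => |v x|) (ball x₀ r) :=
    (hvc.abs.integrableOn_compact (isCompact_closedBall x₀ r)).mono_set ball_subset_closedBall
  have key : ∀ ε : ℝ, 0 < ε → ∫ x in ball x₀ r, |v x| ≤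
      2 * K * r * (∫ x in ball x₀ r, ‖fderiv ℝ v x‖) + ε * (2 * volume.real (ball x₀ r)) := by
    intro ε hε
    obtain ⟨φ, h1, h2, h3, h4, h5, h6⟩ := trunc_test hr hv hv' hvc hv0 hT hT1 hε
    have hP := poincare_one hN h1 hr (fun x hx => (h6 x hx).1)
    have e1 : ∫ x, |φ x| = ∫ x in ball x₀ r, |φ x| :=
      (setIntegral_eq_integral_of_forall_compl_eq_zero fun x hx => by simp [(h6 x hx).1]).symm
    have e2 : ∫ x, ‖fderiv ℝ φ x‖ = ∫ x in ball x₀ r, ‖fderiv ℝ φ x‖ :=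
      (setIntegral_eq_integral_of_forall_compl_eq_zero fun x hx => by simp [(h6 x hx).2]).symm
    have hφi : IntegrableOn (fun x => |φ x|) (ball x₀ r) :=
      (h1.continuous.integrable_of_hasCompactSupport h2).abs.integrableOn
    have hφ'i : IntegrableOn (fun x => ‖fderiv ℝ φ x‖) (ball x₀ r) :=
      ((h1.continuous_fderiv one_ne_zero).integrable_of_hasCompactSupport
        (h2.fderiv ℝ)).norm.integrableOn
    have l1 : ∫ x in ball x₀ r, ‖fderiv ℝ φ x‖ ≤ K * ∫ x in ball x₀ r, ‖fderiv ℝ v x‖ := by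
      rw [← integral_const_mul]
      refine setIntegral_mono_on hφ'i (hi.const_mul K) measurableSet_ball fun x hx => ?_
      rw [h5 x hx, norm_smul, Real.norm_eq_abs]
      gcongr; exact hTK _
    have hci : IntegrableOn (fun _ => ε * 2) (ball x₀ r) :=
      integrableOn_const measure_ball_lt_top.ne
    have l2 : ∫ x in ball x₀ r, |v x| ≤ (∫ x in ball x₀ r, |φ x|) + ε * (2 * volume.real (ball x₀ r)) := by
      calc _ ≤ ∫ x in ball x₀ r, (|φ x| + ε * 2) := by
            refine setIntegral_mono_on hiv (hφi.add hci) measurableSet_ball fun x hx => ?_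
            rw [h4 x hx]
            have h := hT3 (v x / ε)
            have h' : |ε * T (v x / ε) - v x| ≤ ε * 2 := by
              have : ε * T (v x / ε) - v x = ε * (T (v x / ε) - v x / ε) := by field_simp
              rw [this, abs_mul, abs_of_pos hε]; gcongr
            have h'' := abs_sub_abs_le_abs_sub (v x) (ε * T (v x / ε))
            rw [abs_sub_comm] at h''
            linarith
        _ = _ := by
            rw [integral_add hφi hci]
            simp; ring
    rw [e1, e2] at hP
    have : 2 * r * (∫ x in ball x₀ r, ‖fderiv ℝ φ x‖) ≤ 2 * r * (K * ∫ x in ball x₀ r, ‖fderiv ℝ v x‖) := by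
      gcongr
    linarith
  refine le_of_forall_pos_le_add fun δ hδ => ?_
  have hV : 0 ≤ volume.real (ball x₀ r) := measureReal_nonneg
  refine (key (δ / (2 * volume.real (ball x₀ r) + 1)) (by positivity)).trans ?_
  gcongr
  rw [div_mul_eq_mul_div, div_le_iff₀ (by positivity)]
  nlinarith

lemma final_alg {X V R D a p I : ℝ} (hX : 0 ≤ X) (hV : 0 < V) (hR : 0 < R) (hD : 0 < D)
    (hp : 2 ≤ p) (ha : 0 < a) (ha1 : a ≤ 1)
    (h : X ≤ D * (R ^ a * V ^ (1 - a / p)) * X ^ (a / p))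
    (hI : I ≤ V ^ (1 - 2 / p) * X ^ (2 / p)) :
    I ≤ V * D ^ (2 / (p - a)) * R ^ (2 * a / (p - a)) := by
  have hp0 : 0 < p := by linarith
  have hpa : 0 < p - a := by linarith
  have hX2 : X ^ (2 / p) ≤ D ^ (2 / (p - a)) * R ^ (2 * a / (p - a)) * V ^ (2 / p) := by
    rcases hX.eq_or_lt with h0 | h0
    · rw [← h0, Real.zero_rpow (by positivity)]; positivity
    · have h1 : X ^ ((p - a) / p) ≤ D * (R ^ a * V ^ (1 - a / p)) := by
        have e : (p - a) / p = 1 - a / p := by field_simp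
        rw [e, Real.rpow_sub h0, Real.rpow_one, div_le_iff₀ (by positivity)]
        exact h
      have h2 := Real.rpow_le_rpow (by positivity) h1 (show 0 ≤ 2 / (p - a) by positivity)
      rw [← Real.rpow_mul h0.le, Real.mul_rpow hD.le (by positivity),
        Real.mul_rpow (by positivity) (by positivity), ← Real.rpow_mul hR.le,
        ← Real.rpow_mul hV.le] at h2
      have e1 : (p - a) / p * (2 / (p - a)) = 2 / p := by field_simp
      have e2 : (1 - a / p) * (2 / (p - a)) = 2 / p := by field_simp
      have e3 : a * (2 / (p - a)) = 2 * a / (p - a) := by ring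
      rw [e1, e2, e3] at h2
      linarith
  refine hI.trans ?_
  calc _ ≤ V ^ (1 - 2 / p) * (D ^ (2 / (p - a)) * R ^ (2 * a / (p - a)) * V ^ (2 / p)) := by gcongr
    _ = (V ^ (1 - 2 / p) * V ^ (2 / p)) * D ^ (2 / (p - a)) * R ^ (2 * a / (p - a)) := by ring
    _ = _ := by rw [← Real.rpow_add hV]; norm_num

lemma prod_bound {p s t : ℝ} (hp : 2 ≤ p) (hs : 0 ≤ s) (ht : 0 ≤ t) :
    t * (s ^ (p - 2) * s) ≤ t ^ p + s ^ p := by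
  have key : ∀ m : ℝ, 0 ≤ m → m * (m ^ (p - 2) * m) = m ^ p := by
    intro m hm
    rcases hm.eq_or_lt with rfl | hm
    · have h0 : (0:ℝ) ^ p = 0 := Real.zero_rpow (by linarith)
      rw [h0, zero_mul]
    · have : m ^ p = m ^ (p - 2) * m ^ 2 := by
        rw [← Real.rpow_natCast, ← Real.rpow_add hm]; norm_num
      rw [this]; ring
  have h2 : 0 ≤ p - 2 := by linarith
  have hs' : 0 ≤ s ^ p := by positivity
  have ht' : 0 ≤ t ^ p := by positivity
  rcases le_total s t with h | h
  · have := key t ht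
    have h3 : t * (s ^ (p - 2) * s) ≤ t * (t ^ (p - 2) * t) := by
      have := Real.rpow_le_rpow hs h h2
      gcongr
    linarith
  · have := key s hs
    have h3 : t * (s ^ (p - 2) * s) ≤ s * (s ^ (p - 2) * s) := by gcongr
    linarith

lemma core (N : ℕ) (hN : 1 ≤ N) (p γ lp lm δ₀ M : ℝ)
    (hp : 2 ≤ p) (hγ0 : 0 < γ) (hlp : 0 < lp) (hlm : 0 < lm)
    (hδ₀ : 0 < δ₀) (hM : 0 < M) :
    ∃ C : ℝ, 0 < C ∧ ∀ δ : ℝ, 0 ≤ δ → δ ≤ δ₀ →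
      ∀ (u w : EuclideanSpace ℝ (Fin N) → ℝ) (x₀ : EuclideanSpace ℝ (Fin N)) (R : ℝ), 0 < R →
        (∀ x ∈ closedBall x₀ (2 * R), DifferentiableAt ℝ u x) →
        ContinuousOn (fun x => gradient u x) (closedBall x₀ (2 * R)) →
        (∀ x ∈ ball x₀ (2 * R), |u x| ≤ M) →
        (∀ x ∈ ball x₀ (2 * R), |w x| ≤ M) →
        (∀ x ∈ ball x₀ (2 * R), DifferentiableAt ℝ w x) →
        ContinuousOn (fun x => gradient w x) (ball x₀ (2 * R)) →
        ContinuousOn w (closedBall x₀ (2 * R)) →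
        (∀ φ : EuclideanSpace ℝ (Fin N) → ℝ, ContDiff ℝ (⊤ : ℕ∞) φ → HasCompactSupport φ →
          tsupport φ ⊆ ball x₀ (2 * R) →
          (∫ x in ball x₀ (2 * R),
            ‖gradient w x‖ ^ (p - 2) * ⟪gradient w x, gradient φ x⟫_ℝ) = 0) →
        EqOn w u (sphere x₀ (2 * R)) →
        IntegrableOn (fun x => ‖gradient w x‖ ^ p) (ball x₀ (2 * R)) volume →
        (∫ x in ball x₀ (2 * R),
            (‖gradient u x‖ ^ p / p + δ * Fgam γ lp lm (u x))) ≤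
          (∫ x in ball x₀ (2 * R),
            (‖gradient w x‖ ^ p / p + δ * Fgam γ lp lm (w x))) →
        (∫ x in ball x₀ R, ‖gradient u x - gradient w x‖ ^ (2 : ℝ)) ≤
              C * R ^ ((N : ℝ) + 2 * (min γ 1) / (p - min γ 1)) := by
  obtain ⟨L, hL, hF⟩ := Fgam_holder hγ0 hlp hlm hM
  obtain ⟨K, hK, hP⟩ := poincare_v
  set a := min γ 1 with ha_def
  have ha : 0 < a := lt_min hγ0 one_pos
  have ha1 : a ≤ 1 := min_le_right _ _
  have hp0 : 0 < p := by linarith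
  set c : ℝ := 2 * (1/2:ℝ) ^ p with hc_def
  have hc : 0 < c := by positivity
  set D : ℝ := c⁻¹ * (p * δ₀ * L * (K * 2) ^ a) with hD_def
  have hD : 0 < D := by positivity
  set ω : ℝ := volume.real (ball (0 : EuclideanSpace ℝ (Fin N)) 1) with hω_def
  have hω : 0 < ω := ENNReal.toReal_pos (measure_ball_pos _ _ one_pos).ne' measure_ball_lt_top.ne
  refine ⟨2 ^ N * ω * D ^ (2 / (p - a)), by positivity, ?_⟩
  intro δ hδ hδ' u w x₀ R hR hu hu' huM hwM hw hw' hwc hweak hbd hwi hmin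
  have hr : 0 < 2 * R := by positivity
  set B := ball x₀ (2 * R) with hB
  set V := volume.real B with hV_def
  have hB0 : volume B ≠ 0 := (measure_ball_pos _ _ hr).ne'
  have hBt : volume B ≠ ⊤ := measure_ball_lt_top.ne
  have hV : 0 < V := ENNReal.toReal_pos hB0 hBt
  have hVe : V = 2 ^ N * ω * R ^ (N : ℝ) := by
    rw [hV_def, hB, Measure.real, Measure.addHaar_ball_of_pos _ _ hr, ENNReal.toReal_mul,
      ENNReal.toReal_ofReal (by positivity), finrank_euclideanSpace_fin, mul_pow, Real.rpow_natCast]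
    simp only [hω_def, Measure.real]; ring
  have hsub : B ⊆ closedBall x₀ (2 * R) := ball_subset_closedBall
  have huc : ContinuousOn u (closedBall x₀ (2 * R)) := fun x hx =>
    (hu x hx).continuousAt.continuousWithinAt
  have hcomp := isCompact_closedBall x₀ (2 * R)
  -- the difference
  set v : EuclideanSpace ℝ (Fin N) → ℝ := fun x => u x - w x with hv_def
  have hvd : ∀ x ∈ B, DifferentiableAt ℝ v x := fun x hx => (hu x (hsub hx)).sub (hw x hx)
  have hvf : ∀ x ∈ B, fderiv ℝ v x =
      InnerProductSpace.toDual ℝ _ (gradient u x - gradient w x) := fun x hx => by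
    rw [map_sub, toDual_gradient, toDual_gradient]
    exact fderiv_fun_sub (hu x (hsub hx)) (hw x hx)
  have hvn : ∀ x ∈ B, ‖fderiv ℝ v x‖ = ‖gradient u x - gradient w x‖ := fun x hx => by
    rw [hvf x hx, LinearIsometryEquiv.norm_map]
  have hgc : ContinuousOn (fun x => gradient u x - gradient w x) B := (hu'.mono hsub).sub hw'
  have hv' : ContinuousOn (fderiv ℝ v) B :=
    ((InnerProductSpace.toDual ℝ _).continuous.comp_continuousOn hgc).congr hvf
  have hvc : ContinuousOn v (closedBall x₀ (2 * R)) := huc.sub hwc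
  have hv0 : ∀ x ∈ sphere x₀ (2 * R), v x = 0 := fun x hx => by simp [hv_def, hbd hx]
  -- integrability
  have hui : IntegrableOn (fun x => ‖gradient u x‖ ^ p) B :=
    ((hu'.norm.rpow_const fun _ _ => Or.inr hp0.le).integrableOn_compact hcomp).mono_set hsub
  have hgi : IntegrableOn (fun x => ‖gradient u x - gradient w x‖ ^ p) B := by
    refine Integrable.mono' ((hui.add hwi).const_mul c⁻¹) ?_ ?_
    · exact (hgc.norm.rpow_const fun _ _ => Or.inr hp0.le).aestronglyMeasurable measurableSet_ball
    · refine Filter.Eventually.of_forall fun x => ?_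
      have h1 := clarkson hp (gradient u x) (gradient w x)
      rw [norm_smul (1/2:ℝ) (gradient u x - gradient w x),
        Real.mul_rpow (by positivity) (by positivity), Real.norm_of_nonneg (by norm_num : (0:ℝ) ≤ 1/2)] at h1
      have h2 : 0 ≤ ‖(1/2:ℝ) • (gradient u x + gradient w x)‖ ^ p := by positivity
      rw [Real.norm_of_nonneg (by positivity), le_inv_mul_iff₀ hc, hc_def]
      simp only [Pi.add_apply]
      linarith
  have hFu : IntegrableOn (fun x => Fgam γ lp lm (u x)) B :=
    (((Fgam_cont hγ0).comp_continuousOn huc).integrableOn_compact hcomp).mono_set hsub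
  have hFw : IntegrableOn (fun x => Fgam γ lp lm (w x)) B :=
    (((Fgam_cont hγ0).comp_continuousOn hwc).integrableOn_compact hcomp).mono_set hsub
  have hvi : IntegrableOn (fun x => |v x|) B :=
    (hvc.abs.integrableOn_compact hcomp).mono_set hsub
  -- the weak equation
  set G : EuclideanSpace ℝ (Fin N) → EuclideanSpace ℝ (Fin N) :=
    fun x => ‖gradient w x‖ ^ (p - 2) • gradient w x with hG_def
  have hG : ContinuousOn G B :=
    (hw'.norm.rpow_const fun _ _ => Or.inr (by linarith)).smul hw'
  have hGn : ∀ x, ‖G x‖ = ‖gradient w x‖ ^ (p - 2) * ‖gradient w x‖ := fun x => by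
    simp only [hG_def]
    rw [norm_smul, Real.norm_of_nonneg (by positivity)]
  have hGi : IntegrableOn (fun x => ‖fderiv ℝ v x‖ * ‖G x‖) B := by
    refine Integrable.mono' (hgi.add hwi) ?_ ?_
    · exact (hv'.norm.mul hG.norm).aestronglyMeasurable measurableSet_ball
    · refine (ae_restrict_iff' measurableSet_ball).2 (Filter.Eventually.of_forall fun x hx => ?_)
      rw [Real.norm_of_nonneg (by positivity), hvn x hx, hGn]
      exact prod_bound hp (norm_nonneg _) (norm_nonneg _)
  have hzero := test_v hr hvd hv' hvc hv0 hG (fun φ h1 h2 h3 => by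
    rw [← hweak φ h1 h2 h3]
    congr 1; ext x
    rw [← inner_gradient_left, inner_smul_right, real_inner_comm]) hGi
  have hpt : ∀ x ∈ B, fderiv ℝ v x (G x) =
      ‖gradient w x‖ ^ (p - 2) * ⟪gradient w x, gradient u x - gradient w x⟫_ℝ := fun x hx => by
    rw [hvf x hx, InnerProductSpace.toDual_apply_apply, inner_smul_right, real_inner_comm]
  have hGi2 : IntegrableOn (fun x => fderiv ℝ v x (G x)) B := by
    refine Integrable.mono' hGi ?_ ?_
    · exact (hv'.clm_apply hG).aestronglyMeasurable measurableSet_ball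
    · exact Filter.Eventually.of_forall fun x => (fderiv ℝ v x).le_opNorm _
  -- energy comparison
  set X := ∫ x in B, ‖gradient u x - gradient w x‖ ^ p with hX_def
  have hX : 0 ≤ X := integral_nonneg fun x => by positivity
  have hconv : (∫ x in B, ‖gradient w x‖ ^ p) + c * X ≤ ∫ x in B, ‖gradient u x‖ ^ p := by
    have hs1 : IntegrableOn (fun x => ‖gradient w x‖ ^ p + p * fderiv ℝ v x (G x)) B :=
      hwi.add (hGi2.const_mul p)
    have h1 : ∫ x in B, ((‖gradient w x‖ ^ p + p * fderiv ℝ v x (G x)) +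
        c * ‖gradient u x - gradient w x‖ ^ p) ≤ ∫ x in B, ‖gradient u x‖ ^ p := by
      refine setIntegral_mono_on (hs1.add (hgi.const_mul c)) hui
        measurableSet_ball fun x hx => ?_
      rw [hpt x hx]
      exact unif_conv hp _ _
    rw [integral_add hs1 (hgi.const_mul c),
      integral_add hwi (hGi2.const_mul p), integral_const_mul, integral_const_mul, hzero] at h1
    linarith
  have hen : c * X ≤ p * (δ * ∫ x in B, (Fgam γ lp lm (w x) - Fgam γ lp lm (u x))) := by
    rw [integral_add (hui.div_const p) (hFu.const_mul δ),
      integral_add (hwi.div_const p) (hFw.const_mul δ), integral_div, integral_div,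
      integral_const_mul, integral_const_mul] at hmin
    rw [integral_sub hFw hFu]
    have h2 := mul_le_mul_of_nonneg_left hmin hp0.le
    rw [mul_add, mul_add, mul_div_cancel₀ _ hp0.ne', mul_div_cancel₀ _ hp0.ne'] at h2
    linarith
  obtain ⟨hai, haJ⟩ := jensen_pow hB0 hBt hvi (fun x => abs_nonneg _) ha ha1
  have hFi : ∫ x in B, (Fgam γ lp lm (w x) - Fgam γ lp lm (u x)) ≤ L * ∫ x in B, |v x| ^ a := by
    rw [← integral_const_mul]
    refine setIntegral_mono_on (hFw.sub hFu) (hai.const_mul L) measurableSet_ball fun x hx => ?_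
    have := (le_abs_self _).trans (hF (w x) (u x) (hwM x hx) (huM x hx))
    rwa [abs_sub_comm (w x) (u x)] at this
  have hq : 1 / p ≤ 1 := by rw [div_le_one hp0]; linarith
  have hgp : ∀ x, (‖gradient u x - gradient w x‖ ^ p) ^ (1 / p) = ‖gradient u x - gradient w x‖ :=
    fun x => by rw [← Real.rpow_mul (norm_nonneg _), mul_one_div_cancel hp0.ne', Real.rpow_one]
  obtain ⟨hZi, hZJ⟩ := jensen_pow hB0 hBt hgi (fun x => by positivity)
    (show 0 < 1 / p by positivity) hq
  simp only [hgp] at hZi hZJ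
  have hvni : IntegrableOn (fun x => ‖fderiv ℝ v x‖) B :=
    hZi.congr_fun (fun x hx => (hvn x hx).symm) measurableSet_ball
  have hPv := hP hN hr hvd hv' hvc hv0 hvni
  rw [setIntegral_congr_fun measurableSet_ball (fun x hx => hvn x hx)] at hPv
  set Y := ∫ x in B, |v x| with hY_def
  have hY : 0 ≤ Y := integral_nonneg fun x => abs_nonneg _
  have hYX : Y ≤ K * 2 * R * (V ^ (1 - 1 / p) * X ^ (1 / p)) := by
    calc Y ≤ _ := hPv
      _ ≤ K * (2 * R) * (V ^ (1 - 1 / p) * X ^ (1 / p)) := by gcongr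
      _ = _ := by ring
  have hYa : Y ^ a ≤ (K * 2) ^ a * R ^ a * (V ^ ((1 - 1 / p) * a) * X ^ (a / p)) := by
    refine (Real.rpow_le_rpow hY hYX ha.le).trans (le_of_eq ?_)
    have e : 1 / p * a = a / p := by ring
    rw [Real.mul_rpow (x := K * 2 * R) (by positivity) (by positivity),
      Real.mul_rpow (x := K * 2) (y := R) (by positivity) hR.le,
      Real.mul_rpow (x := V ^ (1 - 1 / p)) (y := X ^ (1 / p)) (by positivity) (by positivity),
      ← Real.rpow_mul hV.le, ← Real.rpow_mul hX, e]
  have hmain : X ≤ D * (R ^ a * V ^ (1 - a / p)) * X ^ (a / p) := by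
    have hI0 : 0 ≤ ∫ x in B, |v x| ^ a := integral_nonneg fun x => by positivity
    have h1 : c * X ≤ p * (δ₀ * (L * (V ^ (1 - a) *
        ((K * 2) ^ a * R ^ a * (V ^ ((1 - 1 / p) * a) * X ^ (a / p)))))) := by
      refine hen.trans ?_
      gcongr p * ?_
      calc _ ≤ δ * (L * ∫ x in B, |v x| ^ a) := by gcongr
        _ ≤ δ₀ * (L * ∫ x in B, |v x| ^ a) := by gcongr
        _ ≤ _ := by
          gcongr
          exact haJ.trans (by gcongr)
    have e : V ^ (1 - a / p) = V ^ (1 - a) * V ^ ((1 - 1 / p) * a) := by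
      rw [← Real.rpow_add hV]; congr 1; field_simp; ring
    rw [← le_inv_mul_iff₀ hc] at h1
    refine h1.trans (le_of_eq ?_)
    rw [hD_def, e]; ring
  have hq2 : 2 / p ≤ 1 := by rw [div_le_one hp0]; linarith
  obtain ⟨hTi, hTJ⟩ := jensen_pow hB0 hBt hgi (fun x => by positivity)
    (show 0 < 2 / p by positivity) hq2
  have hgp2 : ∀ x, (‖gradient u x - gradient w x‖ ^ p) ^ (2 / p) =
      ‖gradient u x - gradient w x‖ ^ (2:ℝ) :=
    fun x => by rw [← Real.rpow_mul (norm_nonneg _), mul_div_cancel₀ _ hp0.ne']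
  simp only [hgp2] at hTi hTJ
  have hmono : (∫ x in ball x₀ R, ‖gradient u x - gradient w x‖ ^ (2 : ℝ)) ≤
      ∫ x in B, ‖gradient u x - gradient w x‖ ^ (2 : ℝ) := by
    refine setIntegral_mono_set hTi (Filter.Eventually.of_forall fun x => ?_)
      (LE.le.eventuallyLE (ball_subset_ball (by linarith)))
    simp only [Pi.zero_apply]; positivity
  have := final_alg hX hV hR hD hp ha ha1 hmain (hmono.trans hTJ)
  refine this.trans (le_of_eq ?_)
  rw [hVe, Real.rpow_add hR]; ring

/-- Comparison estimate with the `p`-harmonic replacement `w` of a local minimizer of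
`J_δ` in the degenerate regime `2 ≤ p`. -/
theorem stmt11 (N : ℕ) (hN : 1 ≤ N) (p γ lp lm δ₀ M : ℝ)
    (hp : 2 ≤ p) (hγ0 : 0 < γ) (hγp : γ < p) (hlp : 0 < lp) (hlm : 0 < lm)
    (hδ₀ : 0 < δ₀) (hM : 0 < M) :
    ∃ C : ℝ, 0 < C ∧
      ∀ (Ω : Set (EuclideanSpace ℝ (Fin N))), IsOpen Ω → Bornology.IsBounded Ω →
      ∀ δ : ℝ, 0 ≤ δ → δ ≤ δ₀ →
      ∀ u : EuclideanSpace ℝ (Fin N) → ℝ,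
        APLocMin N p (fun t => δ * Fgam γ lp lm t) Ω u →
      ∀ (x₀ : EuclideanSpace ℝ (Fin N)) (R : ℝ), 0 < R →
        closure (Metric.ball x₀ (4 * R)) ⊆ Ω →
        (∀ x ∈ Metric.ball x₀ (4 * R), |u x| ≤ M) →
      ∀ w : EuclideanSpace ℝ (Fin N) → ℝ,
        (∀ x ∈ Metric.ball x₀ (2 * R), DifferentiableAt ℝ w x) →
        ContinuousOn (fun x => gradient w x) (Metric.ball x₀ (2 * R)) →
        ContinuousOn w (closure (Metric.ball x₀ (2 * R))) →
        (∀ φ : EuclideanSpace ℝ (Fin N) → ℝ, ContDiff ℝ (⊤ : ℕ∞) φ → HasCompactSupport φ →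
          tsupport φ ⊆ Metric.ball x₀ (2 * R) →
          (∫ x in Metric.ball x₀ (2 * R),
            ‖gradient w x‖ ^ (p - 2) * ⟪gradient w x, gradient φ x⟫_ℝ) = 0) →
        Set.EqOn w u (Metric.sphere x₀ (2 * R)) →
        sSup ((fun x => |w x|) '' Metric.ball x₀ (2 * R)) ≤
          sSup ((fun x => |u x|) '' Metric.ball x₀ (2 * R)) →
        IntegrableOn (fun x => ‖gradient w x‖ ^ p) (Metric.ball x₀ (2 * R)) volume →
        (∫ x in Metric.ball x₀ (2 * R), ‖gradient w x‖ ^ p) ≤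
          (∫ x in Metric.ball x₀ (2 * R), ‖gradient u x‖ ^ p) →
        (∫ x in Metric.ball x₀ (2 * R),
            (‖gradient u x‖ ^ p / p + δ * Fgam γ lp lm (u x))) ≤
          (∫ x in Metric.ball x₀ (2 * R),
            (‖gradient w x‖ ^ p / p + δ * Fgam γ lp lm (w x))) →
        ((γ ≤ 1 →
            (∫ x in Metric.ball x₀ R, ‖gradient u x - gradient w x‖ ^ (2 : ℝ)) ≤
              C * R ^ ((N : ℝ) + 2 * γ / (p - γ))) ∧
          (1 ≤ γ →
            (∫ x in Metric.ball x₀ R, ‖gradient u x - gradient w x‖ ^ (2 : ℝ)) ≤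
              C * R ^ ((N : ℝ) + 2 / (p - 1)))) := by
  obtain ⟨C, hC, H⟩ := core N hN p γ lp lm δ₀ M hp hγ0 hlp hlm hδ₀ hM
  refine ⟨C, hC, ?_⟩
  intro Ω hΩ _ δ hδ hδ' u hu x₀ R hR hsub huM w hw hw' hwc hweak hbd hsup hwi _ hmin
  have hr : 0 < 2 * R := by positivity
  have h24 : ball x₀ (2 * R) ⊆ ball x₀ (4 * R) := ball_subset_ball (by linarith)
  have hcΩ : closedBall x₀ (2 * R) ⊆ Ω :=
    (closedBall_subset_ball (by linarith)).trans (subset_closure.trans hsub)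
  rw [closure_ball x₀ hr.ne'] at hwc
  have hwM : ∀ x ∈ ball x₀ (2 * R), |w x| ≤ M := by
    intro x hx
    have hb : BddAbove ((fun x => |w x|) '' ball x₀ (2 * R)) :=
      ((isCompact_closedBall x₀ (2 * R)).bddAbove_image hwc.abs).mono
        (image_mono ball_subset_closedBall)
    refine (le_csSup hb (mem_image_of_mem _ hx)).trans (hsup.trans ?_)
    refine csSup_le ((nonempty_ball.2 hr).image _) ?_
    rintro _ ⟨y, hy, rfl⟩
    exact huM y (h24 hy)
  have key := H δ hδ hδ' u w x₀ R hR (fun x hx => hu.1 x (hcΩ hx)) (hu.2.1.mono hcΩ)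
    (fun x hx => huM x (h24 hx)) hwM hw hw' hwc hweak hbd hwi hmin
  refine ⟨fun h => ?_, fun h => ?_⟩
  · rwa [min_eq_left h] at key
  · rwa [min_eq_right h, mul_one] at key
end
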